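/- Let K belong to the class R and have exactly one singular vertex t. Let uv be an edge of K with uv ∉ lk(t,K). Then lk(u,K) ∩ lk(v,K) − lk(uv,K) is a nonempty closed subcomplex of K contained in the interiors of the discs lk(u,K) − st(v, lk(u,K)) and lk(v,K) − st(u, lk(v,K)). In particular, there do not exist a vertex z ∈ lk(u,K) ∩ lk(v,K) − lk(uv,K) and a vertex w ∈ lk(uv,K) such that the edge zw lies in lk(u,K) ∩ lk(v,K) − lk(uv,K). -/

import Mathlib

/-- An abstract simplicial complex on vertex set `ℕ`: a finite, downward closed
collection of nonempty finite sets of vertices. -/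
structure SComplex where
  faces : Finset (Finset ℕ)
  not_empty_mem : ∅ ∉ faces
  down_closed : ∀ s ∈ faces, ∀ t ⊆ s, t ≠ ∅ → t ∈ faces

namespace SComplex

/-- The set of vertices of the complex. -/
def vertexSet (K : SComplex) : Finset ℕ := K.faces.sup id

/-- `fnum K i` is the number of `i`-dimensional faces of `K`. -/
def fnum (K : SComplex) (i : ℕ) : ℕ := (K.faces.filter fun s => s.card = i + 1).card

/-- `g₂` for a 3-dimensional complex: `f₁ - 4 f₀ + 10`. -/
def g2 (K : SComplex) : ℤ := (K.fnum 1 : ℤ) - 4 * (K.fnum 0 : ℤ) + 10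

/-- `g₂` for a 2-dimensional complex: `f₁ - 3 f₀ + 6`. -/
def g2surf (K : SComplex) : ℤ := (K.fnum 1 : ℤ) - 3 * (K.fnum 0 : ℤ) + 6

/-- Euler characteristic of a (2-dimensional) complex. -/
def euler (K : SComplex) : ℤ := (K.fnum 0 : ℤ) - (K.fnum 1 : ℤ) + (K.fnum 2 : ℤ)

/-- The link of a face `σ`. -/
def lk (K : SComplex) (σ : Finset ℕ) : SComplex where
  faces := K.faces.filter fun γ => γ ∩ σ = ∅ ∧ γ ∪ σ ∈ K.faces
  not_empty_mem := fun h => K.not_empty_mem (Finset.mem_filter.mp h).1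
  down_closed := by
    intro s hs t hts ht
    rw [Finset.mem_filter] at hs ⊢
    refine ⟨K.down_closed s hs.1 t hts ht, ?_, ?_⟩
    · have h1 : t ∩ σ ⊆ s ∩ σ := Finset.inter_subset_inter hts (Finset.Subset.refl σ)
      rw [hs.2.1] at h1
      exact Finset.subset_empty.mp h1
    · refine K.down_closed (s ∪ σ) hs.2.2 (t ∪ σ)
        (Finset.union_subset_union hts (Finset.Subset.refl σ)) ?_
      intro hc
      exact ht (Finset.union_eq_empty.mp hc).1

/-- The (closed) star of a face `σ`. -/
def st (K : SComplex) (σ : Finset ℕ) : SComplex where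
  faces := K.faces.filter fun α => α ∪ σ ∈ K.faces
  not_empty_mem := fun h => K.not_empty_mem (Finset.mem_filter.mp h).1
  down_closed := by
    intro s hs t hts ht
    rw [Finset.mem_filter] at hs ⊢
    refine ⟨K.down_closed s hs.1 t hts ht, ?_⟩
    refine K.down_closed (s ∪ σ) hs.2 (t ∪ σ)
      (Finset.union_subset_union hts (Finset.Subset.refl σ)) ?_
    intro hc
    exact ht (Finset.union_eq_empty.mp hc).1

/-- A facet is a maximal face. -/
def IsFacet (K : SComplex) (s : Finset ℕ) : Prop :=
  s ∈ K.faces ∧ ∀ t ∈ K.faces, s ⊆ t → s = t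

/-- A pure `d`-dimensional complex: all facets have `d+1` vertices. -/
def IsPure (K : SComplex) (d : ℕ) : Prop :=
  K.faces.Nonempty ∧ ∀ s, K.IsFacet s → s.card = d + 1

/-- Two facets are adjacent if they share a codimension-one face. -/
def FacetAdj (K : SComplex) (s t : Finset ℕ) : Prop :=
  K.IsFacet s ∧ K.IsFacet t ∧ (s ∩ t).card + 1 = s.card

/-- Strong connectedness: any two facets are joined by a chain of facets, consecutive
ones sharing a codimension-one face. -/
def StronglyConnected (K : SComplex) : Prop :=
  ∀ s t, K.IsFacet s → K.IsFacet t → Relation.ReflTransGen K.FacetAdj s t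

/-- Two vertices are adjacent if they span an edge. -/
def VertAdj (K : SComplex) (u v : ℕ) : Prop := ({u, v} : Finset ℕ) ∈ K.faces

/-- Connectedness of a complex (via its 1-skeleton). -/
def Conn (K : SComplex) : Prop :=
  K.faces.Nonempty ∧
    ∀ u v, {u} ∈ K.faces → {v} ∈ K.faces → Relation.ReflTransGen K.VertAdj u v

/-- A normal `d`-pseudomanifold: pure, strongly connected, every `(d-1)`-face is in
exactly two facets, and links of faces of dimension at most `d-2` are connected. -/
def IsNormalPseudomanifold (K : SComplex) (d : ℕ) : Prop :=
  K.IsPure d ∧ K.StronglyConnected ∧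
    (∀ s ∈ K.faces, s.card = d →
      (K.faces.filter fun F => F.card = d + 1 ∧ s ⊆ F).card = 2) ∧
    (∀ s ∈ K.faces, s.card ≤ d - 1 → (K.lk s).Conn)

/-- The geometric realization `|K|`, as a subspace of `ℕ → ℝ`. -/
def realSpace (K : SComplex) : Set (ℕ → ℝ) :=
  {w | (∀ v, 0 ≤ w v) ∧ ∃ s ∈ K.faces, (∀ v, w v ≠ 0 → v ∈ s) ∧ ∑ v ∈ s, w v = 1}

/-- The link of the vertex `v` triangulates the `(d-1)`-sphere. -/
def HasSphereLink (K : SComplex) (d : ℕ) (v : ℕ) : Prop :=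
  Nonempty (↥((K.lk {v}).realSpace) ≃ₜ
    ↥(Metric.sphere (0 : EuclideanSpace ℝ (Fin d)) 1))

/-- A singular vertex of a normal 3-pseudomanifold: its link is not a 2-sphere. -/
def IsSingular (K : SComplex) (v : ℕ) : Prop :=
  {v} ∈ K.faces ∧ ¬ K.HasSphereLink 3 v

/-- `d(σ)`: the number of vertices of the link of `σ`. -/
def deg (K : SComplex) (σ : Finset ℕ) : ℕ := (K.lk σ).fnum 0

/-- The boundary complex of the simplex on vertex set `s`: all nonempty proper subsets. -/
def properFaces (s : Finset ℕ) : Finset (Finset ℕ) :=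
  s.powerset.filter fun t => t ≠ ∅ ∧ t ≠ s

/-- All nonempty faces of the simplex on vertex set `s`. -/
def simplexFaces (s : Finset ℕ) : Finset (Finset ℕ) :=
  s.powerset.filter fun t => t ≠ ∅

/-- Operation (A): a bistellar 2-move on an edge `uv` with `lk(uv) = ∂(abc)`, `abc ∉ K`. -/
def BistellarTwoMove (K K' : SComplex) : Prop :=
  ∃ u v a b c : ℕ,
    ({u, v} : Finset ℕ) ∈ K.faces ∧ u ≠ v ∧
    ({a, b, c} : Finset ℕ).card = 3 ∧
    u ∉ ({a, b, c} : Finset ℕ) ∧ v ∉ ({a, b, c} : Finset ℕ) ∧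
    (K.lk {u, v}).faces = properFaces {a, b, c} ∧
    ({a, b, c} : Finset ℕ) ∉ K.faces ∧
    K'.faces = ((K.faces.filter fun α => ¬ ({u, v} : Finset ℕ) ⊆ α) ∪
      simplexFaces (insert u {a, b, c})) ∪ simplexFaces (insert v {a, b, c})

/-- The faces of the boundary complex of a pure `d`-dimensional complex with face set `F`:
faces contained in some `(d-1)`-face lying in exactly one facet. -/
def bdryFaces (F : Finset (Finset ℕ)) (d : ℕ) : Finset (Finset ℕ) :=
  F.filter fun s => ∃ r ∈ F, s ⊆ r ∧ r.card = d ∧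
    (F.filter fun t => t.card = d + 1 ∧ r ⊆ t).card = 1

/-- The faces of the cone with apex `w` over the complex with face set `F`. -/
def coneFaces (w : ℕ) (F : Finset (Finset ℕ)) : Finset (Finset ℕ) :=
  (F ∪ F.image (insert w)) ∪ {{w}}

/-- `K₁` is obtained from the normal `d`-pseudomanifold `K` by contracting the
edge `uv` (satisfying the link condition): delete all faces containing `u` or `v`
and cone off the boundary of the result with a new vertex `w`. -/
def EdgeContractionAt (d : ℕ) (K : SComplex) (u v : ℕ) (K₁ : SComplex) : Prop :=
  ({u, v} : Finset ℕ) ∈ K.faces ∧ u ≠ v ∧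
  (K.lk {u}).faces ∩ (K.lk {v}).faces = (K.lk {u, v}).faces ∧
  ∃ w, w ∉ K.vertexSet ∧
    K₁.faces = (K.faces.filter fun α => u ∉ α ∧ v ∉ α) ∪
      coneFaces w (bdryFaces (K.faces.filter fun α => u ∉ α ∧ v ∉ α) d)

/-- Operation (B): an edge contraction in a 3-dimensional complex. -/
def EdgeContraction (K K₁ : SComplex) : Prop := ∃ u v, EdgeContractionAt 3 K u v K₁

/-- The class `R`: normal 3-pseudomanifolds with one or two singular vertices such that
(i) if `K` contains the boundary of a 3-simplex then it contains the 3-simplex and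
(ii) no normal 3-pseudomanifold with smaller `g₂` is obtained from `K` by a
bistellar 2-move, an edge contraction, an edge expansion followed by a bistellar
2-move, or an edge expansion followed by an edge contraction. -/
def InClassR (K : SComplex) : Prop :=
  K.IsNormalPseudomanifold 3 ∧
  1 ≤ {v | K.IsSingular v}.ncard ∧ {v | K.IsSingular v}.ncard ≤ 2 ∧
  (∀ s : Finset ℕ, s.card = 4 → (∀ t ∈ properFaces s, t ∈ K.faces) → s ∈ K.faces) ∧
  (∀ K' : SComplex, K'.IsNormalPseudomanifold 3 →
    (BistellarTwoMove K K' ∨ EdgeContraction K K' ∨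
      (∃ M, EdgeContraction M K ∧ BistellarTwoMove M K') ∨
      (∃ M, EdgeContraction M K ∧ EdgeContraction M K')) →
    K.g2 ≤ K'.g2)



theorem cech_triv {A : Type} [TopologicalSpace A] [SimplyConnectedSpace A]
    [LocallyPathConnectedSpace A] (U : ℕ → Set A) (hU : ∀ i, IsOpen (U i))
    (hcov : ∀ a, ∃ i, a ∈ U i) (g : ℕ → ℕ → Bool)
    (hg : ∀ i j k a, a ∈ U i → a ∈ U j → a ∈ U k → xor (g i j) (g j k) = g i k) :
    ∃ s : ℕ → A → Bool, (∀ i, ContinuousOn (s i) (U i)) ∧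
      ∀ i j a, a ∈ U i → a ∈ U j → s j a = xor (s i a) (g i j) := by
  choose ix hix using hcov
  let Z : FiberBundleCore ℕ A Bool :=
    { baseSet := U
      isOpen_baseSet := hU
      indexAt := ix
      mem_baseSet_at := hix
      coordChange := fun i j _ b => xor b (g i j)
      coordChange_self := by
        intro i x hx v
        have := hg i i i x hx hx hx
        revert this
        cases g i i <;> simp
      continuousOn_coordChange := by
        intro i j
        apply Continuous.continuousOn
        exact (continuous_of_discreteTopology (f := fun b : Bool => xor b (g i j))).comp
          continuous_snd
      coordChange_comp := by
        intro i j k x hx v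
        have := hg i j k x hx.1.1 hx.1.2 hx.2
        rw [← this]
        simp }
  have cov : IsCoveringMap (Bundle.TotalSpace.proj : Z.TotalSpace → A) :=
    FiberBundle.isCoveringMap (F := Bool) (E := Z.Fiber)
  obtain ⟨a0⟩ : Nonempty A := inferInstance
  obtain ⟨F, ⟨-, hF⟩, -⟩ := cov.existsUnique_continuousMap_lifts (ContinuousMap.id A) a0
    (⟨a0, (true : Bool)⟩ : Z.TotalSpace) rfl
  have hF' : ∀ a, (F a).proj = a := fun a => congrFun hF a
  refine ⟨fun i a => (Z.localTriv i (F a)).2, ?_, ?_⟩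
  · intro i
    have h1 : ContinuousOn (Z.localTriv i) (Z.localTriv i).source :=
      (Z.localTriv i).continuousOn_toFun
    have h2 : ContinuousOn (fun a => Z.localTriv i (F a)) (U i) := by
      refine h1.comp F.continuous.continuousOn ?_
      intro a ha
      rw [(Z.localTriv i).mem_source]
      show (F a).proj ∈ U i
      rw [hF']; exact ha
    exact continuous_snd.comp_continuousOn h2
  · intro i j a hi hj
    show xor (F a).2 (g (ix (F a).proj) j) = xor (xor (F a).2 (g (ix (F a).proj) i)) (g i j)
    have key : ∀ b : Bool, xor b (g (ix a) j) = xor (xor b (g (ix a) i)) (g i j) := by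
      intro b
      rw [Bool.xor_assoc, hg _ _ _ a (hix a) hi hj]
    rw [hF']
    exact key _

/-- The point at parameter `r` on the segment from vertex `x` to vertex `y`. -/
def segPt (x y : ℕ) (r : ℝ) : ℕ → ℝ :=
  fun v => (if v = x then 1 - r else 0) + (if v = y then r else 0)

theorem segPt_mem (L : SComplex) {x y : ℕ} (h : ({x, y} : Finset ℕ) ∈ L.faces) {r : ℝ}
    (h0 : 0 ≤ r) (h1 : r ≤ 1) : segPt x y r ∈ L.realSpace := by
  refine ⟨?_, {x, y}, h, ?_, ?_⟩
  · intro v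
    unfold segPt
    split_ifs <;> linarith
  · intro v hv
    unfold segPt at hv
    by_contra hc
    simp only [Finset.mem_insert, Finset.mem_singleton, not_or] at hc
    simp [hc.1, hc.2] at hv
  · unfold segPt
    rw [Finset.sum_add_distrib, Finset.sum_ite_eq', Finset.sum_ite_eq']
    simp

theorem segPt_continuous (x y : ℕ) : Continuous (segPt x y) := by
  unfold segPt
  refine continuous_pi fun v => ?_
  split_ifs <;> fun_prop

theorem segPt_half (x y : ℕ) : segPt x y (1 / 2) = segPt y x (1 / 2) := by
  funext v
  unfold segPt
  norm_num
  ring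

theorem segPt_zero (x y : ℕ) : segPt x y 0 = segPt x x 0 := by
  funext v
  unfold segPt
  simp

theorem sphere_cocycle (L : SComplex)
    (h : ↥L.realSpace ≃ₜ ↥(Metric.sphere (0 : EuclideanSpace ℝ (Fin 3)) 1))
    (T : Finset ℕ) (hT : T ∈ L.faces) (hT3 : T.card = 3) (g : ℕ → ℕ → Bool)
    (hg : ∀ x y z, ({x, y, z} : Finset ℕ) ∈ L.faces → xor (g x y) (g y z) = g x z) :
    ∃ c : ℕ → Bool, ∀ x y, ({x, y} : Finset ℕ) ∈ L.faces → c y = xor (c x) (g x y) := by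
  have hp0 : (fun v => if v ∈ T then (1 / 3 : ℝ) else 0) ∈ L.realSpace := by
    refine ⟨?_, T, hT, ?_, ?_⟩
    · intro v; dsimp only; split_ifs <;> norm_num
    · intro v hv
      by_contra hc
      simp [hc] at hv
    · rw [Finset.sum_ite_mem]
      simp [hT3]
  have : Fact (Module.finrank ℝ (EuclideanSpace ℝ (Fin 3)) = 2 + 1) := ⟨by simp⟩
  let N := h ⟨_, hp0⟩
  let e := stereographic' (E := EuclideanSpace ℝ (Fin 3)) 2 N
  have hes : e.source = {N}ᶜ := stereographic'_source N
  have het : e.target = Set.univ := stereographic'_target N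
  let f : EuclideanSpace ℝ (Fin 2) → ↥L.realSpace := fun y => h.symm (e.symm y)
  have hf : Continuous f := by
    refine h.symm.continuous.comp ?_
    have := e.continuousOn_symm
    rw [het] at this
    exact continuousOn_univ.mp this
  let U : ℕ → Set (EuclideanSpace ℝ (Fin 2)) := fun x => {y | 0 < (f y : ℕ → ℝ) x}
  have hU : ∀ i, IsOpen (U i) := by
    intro i
    exact isOpen_lt continuous_const ((continuous_apply i).comp (continuous_subtype_val.comp hf))
  have hmem : ∀ (p : ℕ → ℝ), p ∈ L.realSpace → ∃ s ∈ L.faces, ∀ v, 0 < p v → v ∈ s := by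
    rintro p ⟨-, s, hs, h1, -⟩
    exact ⟨s, hs, fun v hv => h1 v hv.ne'⟩
  obtain ⟨s, hs1, hs2⟩ := cech_triv U hU (by
      intro a
      obtain ⟨h0, t, ht, h1, h2⟩ := (f a).2
      by_contra hc
      push Not at hc
      have : ∑ v ∈ t, (f a : ℕ → ℝ) v ≤ 0 := by
        apply Finset.sum_nonpos
        intro v _
        have := hc v
        exact not_lt.mp this
      linarith) g (by
      intro i j k a hi hj hk
      obtain ⟨t, ht, h1⟩ := hmem _ (f a).2
      apply hg
      refine L.down_closed t ht _ ?_ (by simp)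
      intro v hv
      simp only [Finset.mem_insert, Finset.mem_singleton] at hv
      rcases hv with rfl | rfl | rfl
      · exact h1 _ hi
      · exact h1 _ hj
      · exact h1 _ hk)
  classical
  let P : (ℕ → ℝ) → EuclideanSpace ℝ (Fin 2) := fun w =>
    if hw : w ∈ L.realSpace then e (h ⟨w, hw⟩) else 0
  have hsrc : ∀ x y, ∀ hxy : ({x, y} : Finset ℕ) ∈ L.faces, ∀ r : ℝ, ∀ h0 : 0 ≤ r,
      ∀ h1 : r ≤ 1, h ⟨segPt x y r, segPt_mem L hxy h0 h1⟩ ∈ e.source := by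
    intro x y hxy r h0 h1
    rw [hes, Set.mem_compl_singleton_iff]
    intro hc
    have hc2 := congrArg Subtype.val (h.injective hc)
    obtain ⟨v, hv, hv2⟩ : ∃ v ∈ T, v ∉ ({x, y} : Finset ℕ) := by
      apply Finset.exists_mem_notMem_of_card_lt_card
      have := Finset.card_le_two (a := x) (b := y)
      omega
    have := congrFun hc2 v
    simp only [Finset.mem_insert, Finset.mem_singleton, not_or] at hv2
    simp [segPt, hv2.1, hv2.2, hv] at this
  have main : ∀ x y, ({x, y} : Finset ℕ) ∈ L.faces → ∀ r : ℝ, 0 ≤ r → r ≤ 1 →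
      (f (P (segPt x y r)) : ℕ → ℝ) = segPt x y r := by
    intro x y hxy r h0 h1
    have hm := segPt_mem L hxy h0 h1
    have hne := hsrc x y hxy r h0 h1
    simp only [P, f, dif_pos hm]
    rw [e.left_inv hne]
    simp
  have cont : ∀ x y, ({x, y} : Finset ℕ) ∈ L.faces →
      ContinuousOn (fun r => P (segPt x y r)) (Set.Icc 0 1) := by
    intro x y hxy
    rw [continuousOn_iff_continuous_domRestrict]
    have h1 : Continuous (fun r : Set.Icc (0 : ℝ) 1 =>
        h ⟨segPt x y r, segPt_mem L hxy r.2.1 r.2.2⟩) :=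
      h.continuous.comp (((segPt_continuous x y).comp continuous_subtype_val).subtype_mk _)
    have h2 := e.continuousOn.comp_continuous h1 (fun r => hsrc x y hxy r r.2.1 r.2.2)
    convert h2 using 1
    funext r
    simp only [Set.domRestrict_apply, P, dif_pos (segPt_mem L hxy r.2.1 r.2.2)]
    rfl
  have key : ∀ x y, ({x, y} : Finset ℕ) ∈ L.faces →
      s x (P (segPt x y 0)) = s x (P (segPt x y (1 / 2))) := by
    intro x y hxy
    have hpre : IsPreconnected (Set.Icc (0 : ℝ) (1 / 2)) := isPreconnected_Icc
    refine hpre.constant (f := fun r => s x (P (segPt x y r))) ?_ (by norm_num) (by norm_num)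
    refine (hs1 x).comp ((cont x y hxy).mono (Set.Icc_subset_Icc_right (by norm_num))) ?_
    intro r hr
    show 0 < (f (P (segPt x y r)) : ℕ → ℝ) x
    rw [main x y hxy r hr.1 (by linarith [hr.2])]
    unfold segPt
    have := hr.1
    have := hr.2
    simp only [if_true]
    split_ifs <;> linarith
  refine ⟨fun x => s x (P (segPt x x 0)), ?_⟩
  intro x y hxy
  have hyx : ({y, x} : Finset ℕ) ∈ L.faces := by rwa [Finset.pair_comm]
  dsimp only
  rw [← segPt_zero y x, ← segPt_zero x y, key y x hyx, key x y hxy, segPt_half y x]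
  apply hs2
  · show 0 < (f (P (segPt x y (1 / 2))) : ℕ → ℝ) x
    rw [main x y hxy _ (by norm_num) (by norm_num)]
    unfold segPt
    simp only [if_true]
    split_ifs <;> norm_num
  · show 0 < (f (P (segPt x y (1 / 2))) : ℕ → ℝ) y
    rw [main x y hxy _ (by norm_num) (by norm_num)]
    unfold segPt
    simp only [if_true]
    split_ifs <;> norm_num

/-- Adjacency of `a` and `b` in the link of `σ` (where `σ` may be empty). -/
def LAdj (K : SComplex) (σ : Finset ℕ) (a b : ℕ) : Prop :=
  a ∉ σ ∧ b ∉ σ ∧ insert a (insert b σ) ∈ K.faces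

/-- Connectedness of the link of `σ` (where `σ` may be empty). -/
def LConn (K : SComplex) (σ : Finset ℕ) : Prop :=
  ∀ a b, a ∉ σ → b ∉ σ → insert a σ ∈ K.faces → insert b σ ∈ K.faces →
    Relation.ReflTransGen (K.LAdj σ) a b

/-- A convenient reformulation of normal 3-pseudomanifolds. -/
structure NPM (K : SComplex) : Prop where
  ne : K.faces.Nonempty
  ext : ∀ s ∈ K.faces, ∃ F ∈ K.faces, s ⊆ F ∧ F.card = 4
  card_le : ∀ s ∈ K.faces, s.card ≤ 4
  two : ∀ r ∈ K.faces, r.card = 3 →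
    ∃ x y, x ≠ y ∧ ∀ z, (z ∉ r ∧ insert z r ∈ K.faces) ↔ (z = x ∨ z = y)
  conn : ∀ σ : Finset ℕ, σ.card ≤ 2 → K.LConn σ

theorem mem_sub {K : SComplex} {s t : Finset ℕ} (h : s ∈ K.faces) (ht : t ⊆ s)
    (hne : t.Nonempty) : t ∈ K.faces :=
  K.down_closed s h t ht hne.ne_empty

theorem face_ne {K : SComplex} {s : Finset ℕ} (h : s ∈ K.faces) : s.Nonempty := by
  rw [Finset.nonempty_iff_ne_empty]
  rintro rfl
  exact K.not_empty_mem h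

theorem mem_eq {K : SComplex} {s t : Finset ℕ} (h : s ∈ K.faces) (ht : ∀ z, z ∈ t ↔ z ∈ s) :
    t ∈ K.faces := by
  rwa [show t = s from Finset.ext ht]

theorem LAdj.symm {K : SComplex} {σ : Finset ℕ} {a b : ℕ} (h : K.LAdj σ a b) : K.LAdj σ b a :=
  ⟨h.2.1, h.1, by rw [Finset.insert_comm]; exact h.2.2⟩

theorem LAdj.left_mem {K : SComplex} {σ : Finset ℕ} {a b : ℕ} (h : K.LAdj σ a b) :
    insert a σ ∈ K.faces :=
  mem_sub h.2.2 (by grind) (by simp)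

theorem LAdj.right_mem {K : SComplex} {σ : Finset ℕ} {a b : ℕ} (h : K.LAdj σ a b) :
    insert b σ ∈ K.faces :=
  mem_sub h.2.2 (by grind) (by simp)

theorem rtg_symm {α : Type*} {R : α → α → Prop} (hR : ∀ a b, R a b → R b a) {a b : α}
    (h : Relation.ReflTransGen R a b) : Relation.ReflTransGen R b a := by
  induction h with
  | refl => exact .refl
  | tail _ h2 ih => exact .head (hR _ _ h2) ih

theorem lpath_symm {K : SComplex} {σ : Finset ℕ} {a b : ℕ}
    (h : Relation.ReflTransGen (K.LAdj σ) a b) : Relation.ReflTransGen (K.LAdj σ) b a :=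
  rtg_symm (fun _ _ h => h.symm) h

theorem mem_lk {K : SComplex} {σ γ : Finset ℕ} :
    γ ∈ (K.lk σ).faces ↔ γ ∈ K.faces ∧ γ ∩ σ = ∅ ∧ γ ∪ σ ∈ K.faces := by
  simp [lk]

theorem mem_lk' {K : SComplex} {σ γ : Finset ℕ} (hγ : γ.Nonempty) :
    γ ∈ (K.lk σ).faces ↔ Disjoint γ σ ∧ γ ∪ σ ∈ K.faces := by
  rw [mem_lk, Finset.disjoint_iff_inter_eq_empty]
  constructor
  · exact fun h => h.2
  · exact fun h => ⟨mem_sub h.2 Finset.subset_union_left hγ, h⟩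

theorem lk_adj_iff {K : SComplex} {σ : Finset ℕ} {a b : ℕ} :
    (K.lk σ).VertAdj a b ↔ K.LAdj σ a b := by
  unfold VertAdj LAdj
  rw [mem_lk' (by simp)]
  have : ({a, b} : Finset ℕ) ∪ σ = insert a (insert b σ) := by ext; simp
  rw [this]
  simp [and_assoc]

theorem lk_vert_iff {K : SComplex} {σ : Finset ℕ} {a : ℕ} :
    {a} ∈ (K.lk σ).faces ↔ a ∉ σ ∧ insert a σ ∈ K.faces := by
  rw [mem_lk' (by simp)]
  simp [Finset.singleton_union]

theorem two_iff (K : SComplex) (r : Finset ℕ) (hr : r.card = 3) :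
    (K.faces.filter fun F => F.card = 3 + 1 ∧ r ⊆ F).card = 2 ↔
    ∃ x y, x ≠ y ∧ ∀ z, (z ∉ r ∧ insert z r ∈ K.faces) ↔ (z = x ∨ z = y) := by
  have key : ∀ F : Finset ℕ, F.card = 3 + 1 → r ⊆ F → ∃ x, x ∉ r ∧ F = insert x r := by
    intro F hF hrF
    obtain ⟨x, hx, hx2⟩ := Finset.exists_mem_notMem_of_card_lt_card (s := r) (t := F) (by omega)
    refine ⟨x, hx2, ?_⟩
    symm
    apply Finset.eq_of_subset_of_card_le
    · exact Finset.insert_subset hx hrF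
    · rw [Finset.card_insert_of_notMem hx2]; omega
  have inj : ∀ x y : ℕ, x ∉ r → insert x r = insert y r → x = y := by
    intro x y hx h
    have : x ∈ insert y r := h ▸ Finset.mem_insert_self x r
    rcases Finset.mem_insert.mp this with h | h
    · exact h
    · exact absurd h hx
  constructor
  · intro h
    obtain ⟨F, G, hFG, hE⟩ := Finset.card_eq_two.mp h
    have hF : F ∈ K.faces ∧ F.card = 3 + 1 ∧ r ⊆ F := by
      rw [← Finset.mem_filter (p := fun F => F.card = 3 + 1 ∧ r ⊆ F), hE]; simp
    have hG : G ∈ K.faces ∧ G.card = 3 + 1 ∧ r ⊆ G := by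
      rw [← Finset.mem_filter (p := fun F => F.card = 3 + 1 ∧ r ⊆ F), hE]; simp
    obtain ⟨x, hx, rfl⟩ := key F hF.2.1 hF.2.2
    obtain ⟨y, hy, rfl⟩ := key G hG.2.1 hG.2.2
    refine ⟨x, y, fun h => hFG (by rw [h]), fun z => ⟨?_, ?_⟩⟩
    · rintro ⟨hz, hzK⟩
      have : insert z r ∈ K.faces.filter fun F => F.card = 3 + 1 ∧ r ⊆ F := by
        rw [Finset.mem_filter]
        exact ⟨hzK, by rw [Finset.card_insert_of_notMem hz, hr], Finset.subset_insert _ _⟩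
      rw [hE, Finset.mem_insert, Finset.mem_singleton] at this
      exact this.imp (inj _ _ hz) (inj _ _ hz)
    · rintro (rfl | rfl)
      · exact ⟨hx, hF.1⟩
      · exact ⟨hy, hG.1⟩
  · rintro ⟨x, y, hxy, h⟩
    have hx := (h x).2 (Or.inl rfl)
    have hy := (h y).2 (Or.inr rfl)
    rw [Finset.card_eq_two]
    refine ⟨insert x r, insert y r, fun hc => hxy (inj _ _ hx.1 hc), ?_⟩
    ext F
    rw [Finset.mem_filter, Finset.mem_insert, Finset.mem_singleton]
    constructor
    · rintro ⟨hF, hc, hs⟩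
      obtain ⟨z, hz, rfl⟩ := key F hc hs
      rcases (h z).1 ⟨hz, hF⟩ with rfl | rfl
      · exact Or.inl rfl
      · exact Or.inr rfl
    · rintro (rfl | rfl)
      · exact ⟨hx.2, by rw [Finset.card_insert_of_notMem hx.1, hr], Finset.subset_insert _ _⟩
      · exact ⟨hy.2, by rw [Finset.card_insert_of_notMem hy.1, hr], Finset.subset_insert _ _⟩

theorem NPM.of_normal {K : SComplex} (h : K.IsNormalPseudomanifold 3) : K.NPM := by
  obtain ⟨⟨hne, hpure⟩, hsc, htwo, hconn⟩ := h
  have hext : ∀ s ∈ K.faces, ∃ F, s ⊆ F ∧ K.IsFacet F := by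
    intro s hs
    obtain ⟨F, hF, hm⟩ := Finset.exists_le_maximal K.faces hs
    exact ⟨F, hF, hm.1, fun t ht h => le_antisymm h (hm.2 ht h)⟩
  have hext' : ∀ s ∈ K.faces, ∃ F ∈ K.faces, s ⊆ F ∧ F.card = 4 := by
    intro s hs
    obtain ⟨F, hF, hm⟩ := hext s hs
    exact ⟨F, hm.1, hF, hpure F hm⟩
  refine ⟨hne, hext', ?_, ?_, ?_⟩
  · intro s hs
    obtain ⟨F, -, h1, h2⟩ := hext' s hs
    exact h2 ▸ Finset.card_le_card h1
  · intro r hr hr3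
    exact (two_iff K r hr3).1 (htwo r hr hr3)
  · intro σ hσ
    rcases σ.eq_empty_or_nonempty with rfl | hσne
    · intro a b _ _ ha hb
      obtain ⟨F, haF, hF⟩ := hext _ ha
      obtain ⟨G, hbG, hG⟩ := hext _ hb
      have hadj : ∀ F ∈ K.faces, ∀ x ∈ F, ∀ y ∈ F, K.LAdj ∅ x y := by
        intro F hF x hx y hy
        exact ⟨by simp, by simp, mem_sub hF (by grind) (by simp)⟩
      have : ∀ G, Relation.ReflTransGen K.FacetAdj F G → ∀ y ∈ G,
          Relation.ReflTransGen (K.LAdj ∅) a y := by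
        intro G hG
        induction hG with
        | refl => exact fun y hy => .single (hadj F hF.1 _ (haF (by simp)) _ hy)
        | @tail G G' _ h2 ih =>
          intro y hy
          obtain ⟨h3, h4, h5⟩ := h2
          have h6 := hpure G h3
          obtain ⟨z, hz⟩ : (G ∩ G').Nonempty := by
            rw [← Finset.card_pos]; omega
          rw [Finset.mem_inter] at hz
          exact (ih z hz.1).tail (hadj G' h4.1 _ hz.2 _ hy)
      exact this G (hsc F G hF hG) b (hbG (by simp))
    · intro a b ha hb haK hbK
      have hσK : σ ∈ K.faces := mem_sub haK (Finset.subset_insert _ _) hσne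
      have := (hconn σ hσK (by omega)).2 a b (lk_vert_iff.2 ⟨ha, haK⟩) (lk_vert_iff.2 ⟨hb, hbK⟩)
      exact this.lift (fun x => x) fun x y h => lk_adj_iff.1 h

theorem NPM.exists_insert {K : SComplex} (h : K.NPM) {σ : Finset ℕ} (hσ : σ ∈ K.faces)
    (hc : σ.card ≤ 3) : ∃ a, a ∉ σ ∧ insert a σ ∈ K.faces := by
  obtain ⟨F, hF, hs, hF4⟩ := h.ext σ hσ
  obtain ⟨x, hx, hx2⟩ := Finset.exists_mem_notMem_of_card_lt_card (s := σ) (t := F) (by omega)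
  exact ⟨x, hx2, mem_sub hF (Finset.insert_subset hx hs) (by simp)⟩

theorem NPM.facet_iff {K : SComplex} (h : K.NPM) {F : Finset ℕ} :
    K.IsFacet F ↔ F ∈ K.faces ∧ F.card = 4 := by
  constructor
  · rintro ⟨h1, h2⟩
    obtain ⟨G, hG, hs, hG4⟩ := h.ext F h1
    rw [h2 G hG hs]
    exact ⟨hG, hG4⟩
  · rintro ⟨h1, h2⟩
    refine ⟨h1, fun t ht hs => Finset.eq_of_subset_of_card_le hs ?_⟩
    have := h.card_le t ht
    omega

theorem NPM.strong {K : SComplex} (h : K.NPM) (n : ℕ) : ∀ σ : Finset ℕ, σ.card + n = 3 →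
    ∀ F G, F ∈ K.faces → F.card = 4 → G ∈ K.faces → G.card = 4 → σ ⊆ F → σ ⊆ G →
      Relation.ReflTransGen K.FacetAdj F G := by
  induction n with
  | zero =>
    intro σ hσ F G hF hF4 hG hG4 hs1 hs2
    by_cases hFG : F = G
    · rw [hFG]
    · refine .single ⟨h.facet_iff.2 ⟨hF, hF4⟩, h.facet_iff.2 ⟨hG, hG4⟩, ?_⟩
      have h1 := Finset.card_le_card (Finset.subset_inter hs1 hs2)
      have h2 : (F ∩ G).card < F.card := by
        apply Finset.card_lt_card
        rw [Finset.ssubset_iff_subset_ne]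
        refine ⟨Finset.inter_subset_left, fun hc => hFG ?_⟩
        exact Finset.eq_of_subset_of_card_le (Finset.inter_eq_left.mp hc) (by omega)
      omega
  | succ n ih =>
    intro σ hσ F G hF hF4 hG hG4 hs1 hs2
    obtain ⟨a, ha, ha2⟩ := Finset.exists_mem_notMem_of_card_lt_card (s := σ) (t := F) (by omega)
    obtain ⟨b, hb, hb2⟩ := Finset.exists_mem_notMem_of_card_lt_card (s := σ) (t := G) (by omega)
    have hp := h.conn σ (by omega) a b ha2 hb2
      (mem_sub hF (Finset.insert_subset ha hs1) (by simp))
      (mem_sub hG (Finset.insert_subset hb hs2) (by simp))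
    have : ∀ b, Relation.ReflTransGen (K.LAdj σ) a b → b ∉ σ ∧ ∀ G, G ∈ K.faces → G.card = 4 →
        insert b σ ⊆ G → Relation.ReflTransGen K.FacetAdj F G := by
      intro b hb
      induction hb with
      | refl =>
        refine ⟨ha2, fun G hG hG4 hs => ?_⟩
        exact ih (insert a σ) (by rw [Finset.card_insert_of_notMem ha2]; omega) F G hF hF4 hG hG4
          (Finset.insert_subset ha hs1) hs
      | @tail b b' _ h2 ih2 =>
        refine ⟨h2.2.1, fun G hG hG4 hs => ?_⟩
        obtain ⟨H, hH, hHs, hH4⟩ := h.ext _ h2.2.2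
        refine (ih2.2 H hH hH4 (by grind)).trans ?_
        exact ih (insert b' σ) (by rw [Finset.card_insert_of_notMem h2.2.1]; omega) H G hH hH4 hG
          hG4 (by grind) hs
    exact (this b hp).2 G hG hG4 (Finset.insert_subset hb hs2)

theorem NPM.normal {K : SComplex} (h : K.NPM) : K.IsNormalPseudomanifold 3 := by
  refine ⟨⟨h.ne, fun s hs => (h.facet_iff.1 hs).2⟩, ?_, ?_, ?_⟩
  · intro s t hs ht
    have h1 := h.facet_iff.1 hs
    have h2 := h.facet_iff.1 ht
    exact h.strong 3 ∅ (by simp) s t h1.1 h1.2 h2.1 h2.2 (by simp) (by simp)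
  · intro r hr hr3
    exact (two_iff K r hr3).2 (h.two r hr hr3)
  · intro σ hσ hc
    refine ⟨?_, ?_⟩
    · obtain ⟨a, ha, haK⟩ := h.exists_insert hσ (by omega)
      exact ⟨{a}, lk_vert_iff.2 ⟨ha, haK⟩⟩
    · intro a b ha hb
      rw [lk_vert_iff] at ha hb
      exact (h.conn σ (by omega) a b ha.1 hb.1 ha.2 hb.2).lift (fun x => x) fun x y h => lk_adj_iff.2 h

theorem NPM.nbr {K : SComplex} (hK : K.NPM) {w x y : ℕ} (hwx : w ≠ x)
    (hy : y ∉ ({w, x} : Finset ℕ)) (hK3 : insert y ({w, x} : Finset ℕ) ∈ K.faces) :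
    ∃ p q, p ≠ q ∧ ∀ z, (K.LAdj {w, x} y z ∧ z ≠ y) ↔ (z = p ∨ z = q) := by
  obtain ⟨p, q, hpq, h⟩ := hK.two _ hK3 (by rw [Finset.card_insert_of_notMem hy, Finset.card_pair hwx])
  refine ⟨p, q, hpq, fun z => ?_⟩
  rw [← h z]
  unfold LAdj
  rw [Finset.insert_comm y z]
  grind

theorem NPM.nbr_unique {K : SComplex} (hK : K.NPM) {w x y p q z : ℕ} (hwx : w ≠ x)
    (hpq : p ≠ q) (hp : K.LAdj {w, x} y p) (hpy : p ≠ y) (hq : K.LAdj {w, x} y q) (hqy : q ≠ y)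
    (hz : K.LAdj {w, x} y z) (hzy : z ≠ y) : z = p ∨ z = q := by
  obtain ⟨p', q', hpq', h⟩ := hK.nbr hwx hp.1 hp.left_mem
  have h1 := (h p).1 ⟨hp, hpy⟩
  have h2 := (h q).1 ⟨hq, hqy⟩
  have h3 := (h z).1 ⟨hz, hzy⟩
  grind

theorem NPM.tjoin {K : SComplex} (hK : K.NPM) {w x a b : ℕ} (hwx : w ≠ x)
    (hp : Relation.ReflTransGen (K.LAdj {w, x}) a b) :
    ∃ h : ℕ → ℕ → Bool, (∀ y p, h y p = h p y) ∧ ∀ y p q, p ≠ q → p ≠ y → q ≠ y →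
      K.LAdj {w, x} y p → K.LAdj {w, x} y q →
      xor (h y p) (h y q) = xor (decide (y = a)) (decide (y = b)) := by
  induction hp with
  | refl => exact ⟨fun _ _ => false, by simp, by simp⟩
  | @tail b b' _ h2 ih =>
    obtain ⟨h, hs, hh⟩ := ih
    by_cases hb : b = b'
    · subst hb
      exact ⟨h, hs, hh⟩
    refine ⟨fun y p => xor (h y p) (decide ((y = b ∧ p = b') ∨ (y = b' ∧ p = b))), ?_, ?_⟩
    · intro y p
      dsimp only
      rw [hs y p]
      congr 1
      rw [decide_eq_decide]
      tauto
    · intro y p q hpq hpy hqy hp hq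
      have h0 := hh y p q hpq hpy hqy hp hq
      have h1 : y = b → (b' = p ∨ b' = q) := by
        rintro rfl
        exact hK.nbr_unique hwx hpq hp hpy hq hqy h2 (Ne.symm hb)
      have h1' : y = b' → (b = p ∨ b = q) := by
        rintro rfl
        exact hK.nbr_unique hwx hpq hp hpy hq hqy h2.symm hb
      have h3 : xor (decide ((y = b ∧ p = b') ∨ (y = b' ∧ p = b)))
          (decide ((y = b ∧ q = b') ∨ (y = b' ∧ q = b))) =
          xor (decide (y = b)) (decide (y = b')) := by
        by_cases hyb : y = b
        · subst hyb
          rcases h1 rfl with h | h <;> subst h <;> simp [hb, hpq, Ne.symm hpq]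
        · by_cases hyb' : y = b'
          · subst hyb'
            rcases h1' rfl with h | h <;> subst h <;> simp [hb, Ne.symm hb, hpq, Ne.symm hpq]
          · simp [hyb, hyb']
      dsimp only
      generalize decide ((y = b ∧ p = b') ∨ (y = b' ∧ p = b)) = A at *
      generalize decide ((y = b ∧ q = b') ∨ (y = b' ∧ q = b)) = B at *
      generalize decide (y = b) = C at *
      generalize decide (y = b') = D at *
      generalize decide (y = a) = E at *
      generalize h y p = F at *
      generalize h y q = G at *
      revert h0 h3
      clear * -
      revert A B C D E F G
      decide

/-- The pair `x, y` is an edge of the triangle `C`. -/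
def isC (C : Finset ℕ) (x y : ℕ) : Bool := decide (x ≠ y ∧ x ∈ C ∧ y ∈ C)

theorem isC_comm (C : Finset ℕ) (x y : ℕ) : isC C x y = isC C y x := by
  unfold isC
  rw [decide_eq_decide]
  constructor <;> (rintro ⟨h1, h2, h3⟩; exact ⟨h1.symm, h3, h2⟩)

theorem NPM.local_col {K : SComplex} (hK : K.NPM) {w : ℕ} {C : Finset ℕ} (hC3 : C.card = 3)
    (hwC : w ∉ C) (hC : ∀ x ∈ C, ∀ y ∈ C, ({w, x, y} : Finset ℕ) ∈ K.faces) (x : ℕ) (hwx : w ≠ x) :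
    ∃ h : ℕ → ℕ → Bool, (∀ y p, h y p = h p y) ∧ ∀ y p q, p ≠ q → p ≠ y → q ≠ y →
      K.LAdj {w, x} y p → K.LAdj {w, x} y q →
      xor (h y p) (h y q) = isC C x y := by
  by_cases hx : x ∈ C
  · obtain ⟨a, b, hab, hE⟩ := Finset.card_eq_two.mp (show (C.erase x).card = 2 by
      rw [Finset.card_erase_of_mem hx, hC3])
    have hmem : ∀ z, z ∈ C ↔ z = x ∨ z = a ∨ z = b := by
      intro z
      have : z ∈ C.erase x ↔ z ∈ ({a, b} : Finset ℕ) := by rw [hE]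
      simp only [Finset.mem_erase, Finset.mem_insert, Finset.mem_singleton] at this
      grind
    have hax : a ≠ x ∧ a ∈ C := by
      rw [← Finset.mem_erase, hE]; simp
    have hbx : b ≠ x ∧ b ∈ C := by
      rw [← Finset.mem_erase, hE]; simp
    have hpath := hK.conn {w, x} (by rw [Finset.card_pair hwx]) a b (by grind) (by grind)
      (mem_eq (hC x hx a hax.2) (by grind)) (mem_eq (hC x hx b hbx.2) (by grind))
    obtain ⟨h, h1, h2⟩ := hK.tjoin hwx hpath
    refine ⟨h, h1, ?_⟩
    intro y p q hpq hpy hqy hp hq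
    rw [h2 y p q hpq hpy hqy hp hq]
    have hyx : y ≠ x := by have := hp.1; grind
    unfold isC
    by_cases hya : y = a
    · subst hya
      simp [hab, hx, hax.2, hyx.symm]
    · by_cases hyb : y = b
      · subst hyb
        simp [hya, hx, hbx.2, hyx.symm]
      · simp [hya, hyb, hmem y, hyx]
  · refine ⟨fun _ _ => false, by simp, ?_⟩
    intros
    simp [isC, hx]

theorem NPM.coloring {K : SComplex} (hK : K.NPM) {w : ℕ} {C : Finset ℕ} (hC3 : C.card = 3)
    (hwC : w ∉ C) (hC : ∀ x ∈ C, ∀ y ∈ C, ({w, x, y} : Finset ℕ) ∈ K.faces)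
    (hsph : K.HasSphereLink 3 w) :
    ∃ H : Finset ℕ → Bool, ∀ x y p q, w ≠ x → p ≠ q → p ≠ y → q ≠ y →
      K.LAdj {w, x} y p → K.LAdj {w, x} y q →
      xor (H {x, y, p}) (H {x, y, q}) = isC C x y := by
  obtain ⟨φ⟩ := hsph
  choose! h hsym hh using fun x hwx => hK.local_col hC3 hwC hC x hwx
  -- the edge cocycle
  have hgex : ∀ x y, ∃ b : Bool, (x = y → b = false) ∧ ∀ p, w ≠ x → x ≠ y → p ≠ y →
      K.LAdj {w, x} y p → b = xor (h x y p) (h y x p) := by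
    intro x y
    by_cases hex : ∃ p, w ≠ x ∧ x ≠ y ∧ p ≠ y ∧ K.LAdj {w, x} y p
    · obtain ⟨p, hwx, hxy, hpy, hp⟩ := hex
      refine ⟨xor (h x y p) (h y x p), fun h => absurd h hxy, ?_⟩
      intro q _ _ hqy hq
      by_cases hpq : p = q
      · rw [hpq]
      have hwy : w ≠ y := by have := hp.1; grind
      have hp' : K.LAdj {w, y} x p := by
        have := hp.1; have := hp.2.1
        exact ⟨by grind, by grind, mem_eq hp.2.2 (by grind)⟩
      have hq' : K.LAdj {w, y} x q := by
        have := hq.1; have := hq.2.1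
        exact ⟨by grind, by grind, mem_eq hq.2.2 (by grind)⟩
      have h1 := hh x hwx y p q hpq hpy hqy hp hq
      have h2 := hh y hwy x p q hpq (by have := hp.2.1; grind) (by have := hq.2.1; grind) hp' hq'
      rw [isC_comm] at h2
      rw [← h1] at h2
      revert h2
      clear * -
      generalize h x y p = A
      generalize h x y q = B
      generalize h y x p = C
      generalize h y x q = D
      revert A B C D
      decide
    · refine ⟨false, fun _ => rfl, ?_⟩
      intro p h1 h2 h3 h4
      exact absurd ⟨p, h1, h2, h3, h4⟩ hex
  choose g hg0 hg using hgex
  have hL : ∀ s : Finset ℕ, s ∈ (K.lk {w}).faces → w ∉ s ∧ insert w s ∈ K.faces := by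
    intro s hs
    rw [mem_lk] at hs
    refine ⟨?_, mem_eq hs.2.2 (by grind)⟩
    intro hw
    have : w ∈ s ∩ {w} := by simp [hw]
    rw [hs.2.1] at this
    simp at this
  have hgsym : ∀ x y, {x, y} ∈ (K.lk {w}).faces → g x y = g y x := by
    intro x y hxy
    by_cases hne : x = y
    · rw [hne]
    obtain ⟨h1, h2⟩ := hL _ hxy
    have hwx : w ≠ x := by grind
    have hwy : w ≠ y := by grind
    obtain ⟨p, hp, hpK⟩ := hK.exists_insert h2 (by
      rw [Finset.card_insert_of_notMem h1, Finset.card_pair hne])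
    rw [hg x y p hwx hne (by grind) ⟨by grind, by grind, mem_eq hpK (by grind)⟩,
      hg y x p hwy (Ne.symm hne) (by grind) ⟨by grind, by grind, mem_eq hpK (by grind)⟩,
      Bool.xor_comm]
  have hcoc : ∀ x y z, ({x, y, z} : Finset ℕ) ∈ (K.lk {w}).faces →
      xor (g x y) (g y z) = g x z := by
    intro x y z hxyz
    by_cases hxy : x = y
    · subst hxy; simp [hg0 x x rfl]
    by_cases hyz : y = z
    · subst hyz; simp [hg0 y y rfl]
    by_cases hxz : x = z
    · subst hxz
      rw [hgsym x y (mem_sub hxyz (by grind) (by simp))]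
      simp [hg0 x x rfl]
    obtain ⟨h1, h2⟩ := hL _ hxyz
    have hwx : w ≠ x := by grind
    have hwy : w ≠ y := by grind
    have hwz : w ≠ z := by grind
    rw [hg x y z hwx hxy (by grind) ⟨by grind, by grind, mem_eq h2 (by grind)⟩,
      hg y z x hwy hyz (by grind) ⟨by grind, by grind, mem_eq h2 (by grind)⟩,
      hg x z y hwx hxz (by grind) ⟨by grind, by grind, mem_eq h2 (by grind)⟩]
    rw [hsym x hwx z y, hsym z hwz y x, hsym y hwy z x]
    generalize h x y z = A
    generalize h y x z = B
    generalize h z x y = C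
    revert A B C
    decide
  -- a triangle in the link
  obtain ⟨x0, hx0⟩ : C.Nonempty := by rw [← Finset.card_pos]; omega
  obtain ⟨F, hF, hFs, hF4⟩ := hK.ext _ (hC x0 hx0 x0 hx0)
  have hwF : w ∈ F := hFs (by simp)
  obtain ⟨c, hc⟩ := sphere_cocycle (K.lk {w}) φ (F.erase w) (by
      rw [mem_lk' (by rw [← Finset.card_pos, Finset.card_erase_of_mem hwF]; omega)]
      exact ⟨by simp, mem_eq hF (by grind)⟩) (by rw [Finset.card_erase_of_mem hwF]; omega) g hcoc
  -- symmetric colour of triangles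
  have hcol : ∀ x y p, w ≠ x → p ≠ y → K.LAdj {w, x} y p →
      xor (c x) (h x y p) = xor (c y) (h y x p) := by
    intro x y p hwx hpy hp
    have hxy : x ≠ y := by have := hp.1; grind
    have hwy : w ≠ y := by have := hp.1; grind
    have : ({x, y} : Finset ℕ) ∈ (K.lk {w}).faces := by
      rw [mem_lk' (by simp)]
      refine ⟨?_, mem_sub hp.2.2 (by grind) (by simp)⟩
      simp [hwx, hwy]
    rw [hc x y this, hg x y p hwx hxy hpy hp]
    generalize h x y p = A
    generalize h y x p = B
    generalize c x = C
    revert A B C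
    decide
  have hHex : ∀ T : Finset ℕ, ∃ b : Bool, ∀ x y p, T = {x, y, p} → w ≠ x → p ≠ y →
      K.LAdj {w, x} y p → b = xor (c x) (h x y p) := by
    intro T
    by_cases hex : ∃ x y p, T = {x, y, p} ∧ w ≠ x ∧ p ≠ y ∧ K.LAdj {w, x} y p
    · obtain ⟨x, y, p, hT, hwx, hpy, hp⟩ := hex
      have hp1 := hp.1
      have hp2 := hp.2.1
      have e1 := hcol x y p hwx hpy hp
      have e2 := hcol x p y hwx hpy.symm hp.symm
      have hwy : w ≠ y := by grind
      have hwp : w ≠ p := by grind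
      refine ⟨xor (c x) (h x y p), ?_⟩
      intro x' y' p' hT' hwx' hpy' hp'
      have hp1' := hp'.1
      have hp2' := hp'.2.1
      have hx' : x' = x ∨ x' = y ∨ x' = p := by
        have : x' ∈ T := by rw [hT']; simp
        rw [hT] at this; simpa using this
      have hy' : y' = x ∨ y' = y ∨ y' = p := by
        have : y' ∈ T := by rw [hT']; simp
        rw [hT] at this; simpa using this
      have hp'' : p' = x ∨ p' = y ∨ p' = p := by
        have : p' ∈ T := by rw [hT']; simp
        rw [hT] at this; simpa using this
      have s1 := hsym x hwx y p
      have s2 := hsym y hwy x p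
      have s3 := hsym p hwp x y
      clear hT hT' hp hp'
      simp only [Finset.mem_insert, Finset.mem_singleton, not_or] at hp1' hp2' hp1 hp2
      rcases hx' with rfl | rfl | rfl <;> rcases hy' with rfl | rfl | rfl <;>
        rcases hp'' with rfl | rfl | rfl <;> first | (exfalso; tauto) | grind
    · refine ⟨false, ?_⟩
      intro x y p h1 h2 h3 h4
      exact absurd ⟨x, y, p, h1, h2, h3, h4⟩ hex
  choose H hH using hHex
  refine ⟨H, ?_⟩
  intro x y p q hwx hpq hpy hqy hp hq
  rw [hH _ x y p rfl hwx hpy hp, hH _ x y q rfl hwx hqy hq, ← hh x hwx y p q hpq hpy hqy hp hq]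
  generalize h x y p = A
  generalize h x y q = B
  generalize c x = C
  revert A B C
  decide

/-- The data for splitting the vertex `w` along the triangle `C` in its link. -/
structure SplitOK (K : SComplex) (w : ℕ) (C : Finset ℕ) (H : Finset ℕ → Bool)
    (nw : Bool → ℕ) : Prop where
  hK : K.NPM
  C3 : C.card = 3
  wC : w ∉ C
  hC : ∀ x ∈ C, ∀ y ∈ C, ({w, x, y} : Finset ℕ) ∈ K.faces
  CK : C ∉ K.faces
  hH : ∀ x y p q, w ≠ x → p ≠ q → p ≠ y → q ≠ y →
      K.LAdj {w, x} y p → K.LAdj {w, x} y q →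
      xor (H {x, y, p}) (H {x, y, q}) = isC C x y
  nw_ne : ∀ i, nw i ≠ nw (!i)
  nwK : ∀ i, ∀ s ∈ K.faces, nw i ∉ s

/-- `τ` lies in a triangle of colour `i` of the link of `w`. -/
def Acol (K : SComplex) (w : ℕ) (H : Finset ℕ → Bool) (i : Bool) (τ : Finset ℕ) : Prop :=
  ∃ F, τ ⊆ F ∧ F.card = 3 ∧ w ∉ F ∧ insert w F ∈ K.faces ∧ H F = i

section split

variable {K : SComplex} {w : ℕ} {C : Finset ℕ} {H : Finset ℕ → Bool} {nw : Bool → ℕ}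

theorem Acol.down {i : Bool} {τ τ' : Finset ℕ} (h : Acol K w H i τ) (hs : τ' ⊆ τ) :
    Acol K w H i τ' := by
  obtain ⟨F, h1, h2⟩ := h
  exact ⟨F, hs.trans h1, h2⟩

theorem Acol.not_mem {i : Bool} {τ : Finset ℕ} (h : Acol K w H i τ) : w ∉ τ := by
  obtain ⟨F, h1, h2, h3, h4⟩ := h
  exact fun hw => h3 (h1 hw)

theorem Acol.mem {i : Bool} {τ : Finset ℕ} (h : Acol K w H i τ) : insert w τ ∈ K.faces := by
  obtain ⟨F, h1, h2, h3, h4⟩ := h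
  exact mem_sub h4.1 (Finset.insert_subset_insert _ h1) (by simp)

theorem Acol.card_le {i : Bool} {τ : Finset ℕ} (h : Acol K w H i τ) : τ.card ≤ 3 := by
  obtain ⟨F, h1, h2, h3, h4⟩ := h
  exact h2 ▸ Finset.card_le_card h1

theorem Acol.full {i : Bool} {τ : Finset ℕ} (h : Acol K w H i τ) :
    ∃ F, τ ⊆ F ∧ F.card = 3 ∧ Acol K w H i F := by
  obtain ⟨F, h1, h2, h3⟩ := h
  exact ⟨F, h1, h2, F, Finset.Subset.refl _, h2, h3⟩

theorem Acol_three {i : Bool} {τ : Finset ℕ} (hτ : τ.card = 3) :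
    Acol K w H i τ ↔ w ∉ τ ∧ insert w τ ∈ K.faces ∧ H τ = i := by
  constructor
  · rintro ⟨F, h1, h2, h3⟩
    have : τ = F := Finset.eq_of_subset_of_card_le h1 (by omega)
    rw [this]
    exact h3
  · intro h
    exact ⟨τ, Finset.Subset.refl _, hτ, h⟩

theorem SplitOK.cover (S : SplitOK K w C H nw) {τ : Finset ℕ} (hw : w ∉ τ)
    (h : insert w τ ∈ K.faces) : ∃ i, Acol K w H i τ := by
  obtain ⟨F, hF, hs, hF4⟩ := S.hK.ext _ h
  have hwF : w ∈ F := hs (by simp)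
  refine ⟨H (F.erase w), F.erase w, ?_, ?_, by simp, ?_, rfl⟩
  · intro z hz
    rw [Finset.mem_erase]
    exact ⟨fun h => hw (h ▸ hz), hs (by simp [hz])⟩
  · rw [Finset.card_erase_of_mem hwF, hF4]
  · rwa [Finset.insert_erase hwF]

theorem SplitOK.edge_two (S : SplitOK K w C H nw) {e : Finset ℕ} (he : e.card = 2) (hw : w ∉ e)
    (h : insert w e ∈ K.faces) : ∃ x y, x ≠ y ∧
      (∀ z, (z ∉ e ∧ z ≠ w ∧ insert w (insert z e) ∈ K.faces) ↔ (z = x ∨ z = y)) ∧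
      (xor (H (insert x e)) (H (insert y e)) = decide (e ⊆ C)) := by
  obtain ⟨x, y, hxy, hz⟩ := S.hK.two _ h (by rw [Finset.card_insert_of_notMem hw, he])
  refine ⟨x, y, hxy, ?_, ?_⟩
  · intro z
    rw [← hz z, Finset.insert_comm w z]
    grind
  · have hx := (hz x).2 (Or.inl rfl)
    have hy := (hz y).2 (Or.inr rfl)
    obtain ⟨a, b, hab, rfl⟩ := Finset.card_eq_two.mp he
    have := S.hH a b x y (by grind) hxy (by grind) (by grind)
      ⟨by grind, by grind, mem_eq hx.2 (by grind)⟩ ⟨by grind, by grind, mem_eq hy.2 (by grind)⟩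
    have e1 : ∀ z, insert z ({a, b} : Finset ℕ) = {a, b, z} := by
      intro z; ext; simp; tauto
    rw [e1, e1, this]
    unfold isC
    rw [decide_eq_decide]
    grind

theorem SplitOK.color_const (S : SplitOK K w C H nw) {x : ℕ} (hx : x ∉ C) {i j : Bool}
    (h1 : Acol K w H i {x}) (h2 : Acol K w H j {x}) : i = j := by
  obtain ⟨F, hxF, hF3, hwF, hFK, rfl⟩ := h1
  obtain ⟨G, hxG, hG3, hwG, hGK, rfl⟩ := h2
  have hxF : x ∈ F := hxF (by simp)
  have hxG : x ∈ G := hxG (by simp)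
  have hwx : w ≠ x := by grind
  obtain ⟨y, p, hyp, hF⟩ := Finset.card_eq_two.mp (show (F.erase x).card = 2 by
      rw [Finset.card_erase_of_mem hxF, hF3])
  obtain ⟨y', p', hyp', hG⟩ := Finset.card_eq_two.mp (show (G.erase x).card = 2 by
      rw [Finset.card_erase_of_mem hxG, hG3])
  have hF' : F = {x, y, p} := by rw [← Finset.insert_erase hxF, hF]
  have hG' : G = {x, y', p'} := by rw [← Finset.insert_erase hxG, hG]
  have hxe : x ∉ F.erase x := by simp
  have hxe' : x ∉ G.erase x := by simp
  rw [hF] at hxe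
  rw [hG] at hxe'
  subst hF' hG'
  have hadj : K.LAdj {w, x} y p := ⟨by grind, by grind, mem_eq hFK (by grind)⟩
  have hadj' : K.LAdj {w, x} y' p' := ⟨by grind, by grind, mem_eq hGK (by grind)⟩
  have same : ∀ y p q, K.LAdj {w, x} y p → K.LAdj {w, x} y q → p ≠ y → q ≠ y →
      H {x, y, p} = H {x, y, q} := by
    intro y p q hp hq hpy hqy
    by_cases hpq : p = q
    · rw [hpq]
    have := S.hH x y p q hwx hpq hpy hqy hp hq
    simpa [isC, hx] using this
  have hpath := S.hK.conn {w, x} (by rw [Finset.card_pair hwx]) y y' (by grind) (by grind)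
    hadj.left_mem hadj'.left_mem
  have : ∀ z, Relation.ReflTransGen (K.LAdj {w, x}) y z → ∀ q, K.LAdj {w, x} z q → q ≠ z →
      H {x, y, p} = H {x, z, q} := by
    intro z hz
    induction hz with
    | refl => exact fun q hq hqz => same y p q hadj hq (Ne.symm hyp) hqz
    | @tail z z' _ h2 ih =>
      intro q hq hqz
      by_cases hzz : z = z'
      · subst hzz; exact ih q hq hqz
      rw [ih z' h2 (Ne.symm hzz), show ({x, z, z'} : Finset ℕ) = {x, z', z} by
        rw [Finset.pair_comm z z']]
      exact same z' z q h2.symm hq hzz hqz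
  exact this y' hpath p' hadj' (Ne.symm hyp')

theorem SplitOK.both (S : SplitOK K w C H nw) {i : Bool} {τ : Finset ℕ}
    (h1 : Acol K w H i τ) (h2 : Acol K w H (!i) τ) : τ ⊂ C := by
  rw [Finset.ssubset_iff_subset_ne]
  refine ⟨?_, ?_⟩
  swap
  · rintro rfl
    exact S.CK (mem_sub h1.mem (Finset.subset_insert _ _) (by
      rw [← Finset.card_pos, S.C3]; omega))
  have hc := h1.card_le
  have hcases : τ.card = 0 ∨ τ.card = 1 ∨ τ.card = 2 ∨ τ.card = 3 := by omega
  rcases hcases with h | h | h | h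
  · rw [Finset.card_eq_zero] at h
    simp [h]
  · obtain ⟨x, rfl⟩ := Finset.card_eq_one.mp h
    by_contra hx
    have := S.color_const (by simpa using hx) h1 h2
    simp at this
  · obtain ⟨x, y, hxy, hz, hcol⟩ := S.edge_two h h1.not_mem h1.mem
    by_contra hn
    have key : ∀ j, Acol K w H j τ → H (insert x τ) = j := by
      rintro j ⟨F, hs, hF3, hwF, hFK, rfl⟩
      obtain ⟨z, hz1, hz2⟩ := Finset.exists_mem_notMem_of_card_lt_card (s := τ) (t := F) (by omega)
      have hF : insert z τ = F := by
        apply Finset.eq_of_subset_of_card_le (Finset.insert_subset hz1 hs)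
        rw [Finset.card_insert_of_notMem hz2]; omega
      rw [← hF] at hFK ⊢
      rcases (hz z).1 ⟨hz2, by grind, hFK⟩ with rfl | rfl
      · rfl
      · simpa [hn] using hcol
    have h3 := key _ h1
    have h4 := key _ h2
    rw [h3] at h4
    simp at h4
  · rw [Acol_three h] at h1 h2
    have := h1.2.2.symm.trans h2.2.2
    simp at this

theorem SplitOK.of_C (S : SplitOK K w C H nw) (i : Bool) {τ : Finset ℕ} (h : τ ⊂ C) :
    Acol K w H i τ := by
  obtain ⟨c, hc, hcτ⟩ := Finset.exists_of_ssubset h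
  have he2 : (C.erase c).card = 2 := by rw [Finset.card_erase_of_mem hc, S.C3]
  have hsub : τ ⊆ C.erase c := by
    intro z hz
    rw [Finset.mem_erase]
    exact ⟨fun h => hcτ (h ▸ hz), h.1 hz⟩
  refine Acol.down ?_ hsub
  have hwe : w ∉ C.erase c := fun h => S.wC (Finset.mem_of_mem_erase h)
  have heK : insert w (C.erase c) ∈ K.faces := by
    obtain ⟨a, b, hab, he⟩ := Finset.card_eq_two.mp he2
    have ha : a ∈ C := Finset.mem_of_mem_erase (a := c) (by rw [he]; simp)
    have hb : b ∈ C := Finset.mem_of_mem_erase (a := c) (by rw [he]; simp)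
    rw [he]
    exact S.hC a ha b hb
  obtain ⟨x, y, hxy, hz, hcol⟩ := S.edge_two he2 hwe heK
  have hx := (hz x).2 (Or.inl rfl)
  have hy := (hz y).2 (Or.inr rfl)
  have hsC : C.erase c ⊆ C := Finset.erase_subset _ _
  rw [decide_eq_true hsC] at hcol
  by_cases hi : H (insert x (C.erase c)) = i
  · exact ⟨insert x (C.erase c), Finset.subset_insert _ _,
      by rw [Finset.card_insert_of_notMem hx.1, he2], by grind, hx.2.2, hi⟩
  · refine ⟨insert y (C.erase c), Finset.subset_insert _ _,
      by rw [Finset.card_insert_of_notMem hy.1, he2], by grind, hy.2.2, ?_⟩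
    revert hcol hi
    generalize H (insert x (C.erase c)) = A
    generalize H (insert y (C.erase c)) = B
    clear * -
    revert A B i
    decide

theorem SplitOK.C_mem (S : SplitOK K w C H nw) {τ : Finset ℕ} (h : τ ⊂ C) (hne : τ.Nonempty) :
    τ ∈ K.faces :=
  mem_sub (S.of_C true h).mem (Finset.subset_insert _ _) hne

open Classical in
/-- The complex whose faces are the nonempty subsets of `V` satisfying `P`. -/
noncomputable def mkC (V : Finset ℕ) (P : Finset ℕ → Prop)
    (hd : ∀ s t, P s → t ⊆ s → t.Nonempty → P t) : SComplex where
  faces := V.powerset.filter fun s => s.Nonempty ∧ P s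
  not_empty_mem := by simp
  down_closed := by
    intro s hs t hts ht
    rw [Finset.mem_filter, Finset.mem_powerset] at hs ⊢
    have ht := Finset.nonempty_iff_ne_empty.mpr ht
    exact ⟨hts.trans hs.1, ht, hd s t hs.2.2 hts ht⟩

theorem mem_mkC {V : Finset ℕ} {P : Finset ℕ → Prop}
    {hd : ∀ s t, P s → t ⊆ s → t.Nonempty → P t} {s : Finset ℕ} :
    s ∈ (mkC V P hd).faces ↔ s ⊆ V ∧ s.Nonempty ∧ P s := by
  classical
  simp [mkC]

theorem sub_vertexSet {K : SComplex} {s : Finset ℕ} (h : s ∈ K.faces) : s ⊆ K.vertexSet :=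
  Finset.le_sup (f := id) h

theorem mem_vertexSet {K : SComplex} {x : ℕ} : x ∈ K.vertexSet ↔ ∃ s ∈ K.faces, x ∈ s := by
  simp [vertexSet, Finset.mem_sup]

theorem exists_complex (V : Finset ℕ) (P : Finset ℕ → Prop)
    (hd : ∀ s t, P s → t ⊆ s → t.Nonempty → P t) (hV : ∀ s, P s → s ⊆ V)  :
    ∃ L : SComplex, ∀ s, s ∈ L.faces ↔ s.Nonempty ∧ P s := by
  refine ⟨mkC V P hd, fun s => ?_⟩
  rw [mem_mkC]
  exact ⟨fun h => h.2, fun h => ⟨hV s h.2, h⟩⟩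

/-- `L` is the split complex after the bistellar move. -/
structure IsK2 (K : SComplex) (w : ℕ) (C : Finset ℕ) (H : Finset ℕ → Bool)
    (nw : Bool → ℕ) (L : SComplex) : Prop where
  free : ∀ τ, (∀ i, nw i ∉ τ) → (τ ∈ L.faces ↔ ((τ ∈ K.faces ∧ w ∉ τ) ∨ τ = C))
  ins : ∀ i τ, (∀ i, nw i ∉ τ) → (insert (nw i) τ ∈ L.faces ↔ (Acol K w H i τ ∨ τ = C))
  nboth : ∀ s ∈ L.faces, ∀ i, nw i ∈ s → nw (!i) ∉ s
  nw' : ∀ s ∈ L.faces, w ∉ s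

/-- `M` is the split complex. -/
structure IsM (K : SComplex) (w : ℕ) (C : Finset ℕ) (H : Finset ℕ → Bool)
    (nw : Bool → ℕ) (M : SComplex) : Prop where
  free : ∀ τ, (∀ i, nw i ∉ τ) → (τ ∈ M.faces ↔ (τ ∈ K.faces ∧ w ∉ τ))
  ins : ∀ i τ, (∀ i, nw i ∉ τ) → (insert (nw i) τ ∈ M.faces ↔ Acol K w H i τ)
  ins2 : ∀ τ, (∀ i, nw i ∉ τ) → (insert (nw false) (insert (nw true) τ) ∈ M.faces ↔ τ ⊂ C)
  nw' : ∀ s ∈ M.faces, w ∉ s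

theorem SplitOK.fr (S : SplitOK K w C H nw) {s : Finset ℕ} (h : s ∈ K.faces) : ∀ i, nw i ∉ s :=
  fun i => S.nwK i s h

theorem SplitOK.frA (S : SplitOK K w C H nw) {s : Finset ℕ} {j : Bool} (h : Acol K w H j s) :
    ∀ i, nw i ∉ s :=
  fun i hi => S.nwK i _ h.mem (by simp [hi])

theorem SplitOK.Cne (S : SplitOK K w C H nw) : C.Nonempty := by
  rw [← Finset.card_pos, S.C3]; omega

theorem SplitOK.wK (S : SplitOK K w C H nw) : {w} ∈ K.faces := by
  obtain ⟨c, hc⟩ := S.Cne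
  exact mem_sub (S.hC c hc c hc) (by simp) (by simp)

theorem SplitOK.nww (S : SplitOK K w C H nw) (i : Bool) : nw i ≠ w := by
  intro h
  exact S.nwK i _ S.wK (by simp [h])

theorem SplitOK.frC (S : SplitOK K w C H nw) : ∀ i, nw i ∉ C := by
  intro i hi
  exact S.nwK i _ (S.hC _ hi _ hi) (by simp)

theorem SplitOK.nw_ne' (S : SplitOK K w C H nw) {i j : Bool} (h : i ≠ j) : nw i ≠ nw j := by
  have := S.nw_ne i
  cases i <;> cases j <;> simp_all

theorem SplitOK.nwinj (S : SplitOK K w C H nw) {i j : Bool} (h : nw i = nw j) : i = j := by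
  by_contra h'
  exact S.nw_ne' h' h

theorem SplitOK.Csub (S : SplitOK K w C H nw) {s : Finset ℕ} (h : s ⊆ C) (hne : s.Nonempty) :
    s ∈ K.faces ∧ w ∉ s ∨ s = C := by
  by_cases h' : s = C
  · exact Or.inr h'
  · exact Or.inl ⟨S.C_mem (Finset.ssubset_iff_subset_ne.mpr ⟨h, h'⟩) hne, fun hw => S.wC (h hw)⟩

theorem SplitOK.CsubA (S : SplitOK K w C H nw) {s : Finset ℕ} (i : Bool) (h : s ⊆ C) :
    Acol K w H i s ∨ s = C := by
  by_cases h' : s = C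
  · exact Or.inr h'
  · exact Or.inl (S.of_C i (Finset.ssubset_iff_subset_ne.mpr ⟨h, h'⟩))

theorem ins_inj {a : ℕ} {s t : Finset ℕ} (hs : a ∉ s) (ht : a ∉ t) (h : insert a s = insert a t) :
    s = t := by
  rw [← Finset.erase_insert hs, h, Finset.erase_insert ht]

theorem SplitOK.existsK2 (S : SplitOK K w C H nw) : ∃ L, IsK2 K w C H nw L := by
  obtain ⟨L, hL⟩ := exists_complex (insert (nw true) (insert (nw false) (K.vertexSet ∪ C)))
    (fun s => ((s ∈ K.faces ∧ w ∉ s) ∨ s = C) ∨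
      ∃ i τ, s = insert (nw i) τ ∧ (Acol K w H i τ ∨ τ = C)) (by
    rintro s t (h | ⟨i, τ, rfl, h⟩) hts htn
    · left
      rcases h with h | rfl
      · exact Or.inl ⟨mem_sub h.1 hts htn, fun hw => h.2 (hts hw)⟩
      · exact S.Csub hts htn
    · by_cases hi : nw i ∈ t
      · right
        refine ⟨i, t.erase (nw i), (Finset.insert_erase hi).symm, ?_⟩
        have hsub : t.erase (nw i) ⊆ τ := by grind
        rcases h with h | rfl
        · exact Or.inl (h.down hsub)
        · exact S.CsubA i hsub
      · left
        have hsub : t ⊆ τ := by grind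
        rcases h with h | rfl
        · exact Or.inl ⟨mem_sub h.mem (by grind) htn, fun hw => h.not_mem (hsub hw)⟩
        · exact S.Csub hsub htn) (by
    have h1 : ∀ s ∈ K.faces, s ⊆ insert (nw true) (insert (nw false) (K.vertexSet ∪ C)) := by
      intro s hs
      have := sub_vertexSet hs
      grind
    rintro s ((h | h) | ⟨i, τ, rfl, h⟩)
    · exact h1 s h.1
    · grind
    · have : τ ⊆ insert (nw true) (insert (nw false) (K.vertexSet ∪ C)) := by
        rcases h with h | rfl
        · exact (Finset.subset_insert _ _).trans (h1 _ h.mem)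
        · grind
      cases i <;> grind)
  refine ⟨L, ?_, ?_, ?_, ?_⟩
  · intro τ hf
    rw [hL]
    constructor
    · rintro ⟨_, h | ⟨i, σ, rfl, h⟩⟩
      · exact h
      · exact absurd (Finset.mem_insert_self _ _) (hf i)
    · intro h
      refine ⟨?_, Or.inl h⟩
      rcases h with h | rfl
      · exact face_ne h.1
      · exact S.Cne
  · intro i τ hf
    rw [hL]
    constructor
    · rintro ⟨_, (h | h) | ⟨j, σ, h1, h⟩⟩
      · exact absurd (Finset.mem_insert_self _ _) (S.nwK i _ h.1)
      · exact absurd (h ▸ Finset.mem_insert_self _ _) (S.frC i)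
      · have hσ : ∀ i, nw i ∉ σ := by
          rcases h with h | rfl
          · exact S.frA h
          · exact S.frC
        have : nw i ∈ insert (nw j) σ := h1 ▸ Finset.mem_insert_self _ _
        have : i = j := S.nwinj ((Finset.mem_insert.mp this).resolve_right (hσ i))
        subst this
        rwa [ins_inj (hf i) (hσ i) h1]
    · intro h
      exact ⟨by simp, Or.inr ⟨i, τ, rfl, h⟩⟩
  · intro s hs i hi hi'
    rw [hL] at hs
    rcases hs with ⟨_, (h | h) | ⟨j, σ, rfl, h⟩⟩
    · exact S.nwK i _ h.1 hi
    · exact S.frC i (h ▸ hi)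
    · have hσ : ∀ i, nw i ∉ σ := by
        rcases h with h | rfl
        · exact S.frA h
        · exact S.frC
      have h1 := (Finset.mem_insert.mp hi).resolve_right (hσ _)
      have h2 := (Finset.mem_insert.mp hi').resolve_right (hσ _)
      exact S.nw_ne i (h1.trans h2.symm)
  · intro s hs hw
    rw [hL] at hs
    rcases hs with ⟨_, (h | h) | ⟨j, σ, rfl, h⟩⟩
    · exact h.2 hw
    · exact S.wC (h ▸ hw)
    · have := (Finset.mem_insert.mp hw).resolve_left (fun h => S.nww j h.symm)
      rcases h with h | rfl
      · exact h.not_mem this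
      · exact S.wC this

theorem SplitOK.existsM (S : SplitOK K w C H nw) : ∃ M, IsM K w C H nw M := by
  have h1 : ∀ s ∈ K.faces, s ⊆ insert (nw true) (insert (nw false) (K.vertexSet ∪ C)) := by
    intro s hs
    have := sub_vertexSet hs
    grind
  have nft := S.nw_ne false
  have nft : nw false ≠ nw true := nft
  obtain ⟨L, hL⟩ := exists_complex (insert (nw true) (insert (nw false) (K.vertexSet ∪ C)))
    (fun s => (s ∈ K.faces ∧ w ∉ s) ∨
      (∃ i τ, s = insert (nw i) τ ∧ (Acol K w H i τ)) ∨
      (∃ τ, s = insert (nw false) (insert (nw true) τ) ∧ τ ⊂ C)) (by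
    have hA : ∀ i τ, Acol K w H i τ → ∀ t ⊆ insert (nw i) τ, t.Nonempty →
       (t ∈ K.faces ∧ w ∉ t) ∨
      (∃ i τ, t = insert (nw i) τ ∧ (Acol K w H i τ)) := by
      intro i τ h t hts htn
      by_cases hi : nw i ∈ t
      · right
        refine ⟨i, t.erase (nw i), (Finset.insert_erase hi).symm, ?_⟩
        have hsub : t.erase (nw i) ⊆ τ := by grind
        exact h.down hsub
      · left
        have hsub : t ⊆ τ := by grind
        exact ⟨mem_sub h.mem (by grind) htn, fun hw => h.not_mem (hsub hw)⟩
    rintro s t (h | ⟨i, τ, rfl, h⟩ | ⟨τ, rfl, h⟩) hts htn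
    · left
      exact ⟨mem_sub h.1 hts htn, fun hw => h.2 (hts hw)⟩
    · have := hA i τ h t hts htn
      exact this.elim Or.inl (fun h => Or.inr (Or.inl h))
    · by_cases hi : nw false ∈ t
      · by_cases hi' : nw true ∈ t
        · right; right
          refine ⟨(t.erase (nw false)).erase (nw true), by grind, ?_⟩
          exact lt_of_le_of_lt (b := τ) (by grind) h
        · have := hA false τ (S.of_C _ h) t (by grind) htn
          exact this.elim Or.inl (fun h => Or.inr (Or.inl h))
      · have := hA true τ (S.of_C _ h) t (by grind) htn
        exact this.elim Or.inl (fun h => Or.inr (Or.inl h))) (by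
    rintro s (h | ⟨i, τ, rfl, h⟩ | ⟨τ, rfl, h⟩)
    · exact h1 s h.1
    · have : τ ⊆ insert (nw true) (insert (nw false) (K.vertexSet ∪ C)) := 
        (Finset.subset_insert _ _).trans (h1 _ h.mem)
      cases i <;> grind
    · have := h.1
      grind)
  have frS : ∀ τ, τ ⊂ C → ∀ i, nw i ∉ τ := fun τ h i hi => S.frC i (h.1 hi)
  refine ⟨L, ?_, ?_, ?_, ?_⟩
  · intro τ hf
    rw [hL]
    constructor
    · rintro ⟨_, h | ⟨i, σ, rfl, h⟩ | ⟨σ, rfl, h⟩⟩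
      · exact h
      · exact absurd (Finset.mem_insert_self _ _) (hf i)
      · exact absurd (Finset.mem_insert_self _ _) (hf false)
    · intro h
      exact ⟨face_ne h.1, Or.inl h⟩
  · intro i τ hf
    rw [hL]
    constructor
    · rintro ⟨_, h | ⟨j, σ, h1, h⟩ | ⟨σ, h1, h⟩⟩
      · exact absurd (Finset.mem_insert_self _ _) (S.nwK i _ h.1)
      · have hσ := S.frA h
        have : nw i ∈ insert (nw j) σ := h1 ▸ Finset.mem_insert_self _ _
        have : i = j := S.nwinj ((Finset.mem_insert.mp this).resolve_right (hσ i))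
        subst this
        rwa [ins_inj (hf i) (hσ i) h1]
      · exfalso
        have h2 : nw false ∈ insert (nw i) τ := by rw [h1]; simp
        have h3 : nw true ∈ insert (nw i) τ := by rw [h1]; simp
        rw [Finset.mem_insert] at h2 h3
        exact nft ((h2.resolve_right (hf _)).trans (h3.resolve_right (hf _)).symm)
    · intro h
      exact ⟨by simp, Or.inr (Or.inl ⟨i, τ, rfl, h⟩)⟩
  · intro τ hf
    rw [hL]
    constructor
    · rintro ⟨_, h | ⟨j, σ, h1, h⟩ | ⟨σ, h1, h⟩⟩
      · exact absurd (Finset.mem_insert_self _ _) (S.nwK _ _ h.1)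
      · exfalso
        have hσ := S.frA h
        have h2 : nw false ∈ insert (nw j) σ := by rw [← h1]; simp
        have h3 : nw true ∈ insert (nw j) σ := by rw [← h1]; simp
        rw [Finset.mem_insert] at h2 h3
        exact nft ((h2.resolve_right (hσ _)).trans (h3.resolve_right (hσ _)).symm)
      · have h4 := frS σ h
        have h5 : τ = σ := by
          apply ins_inj (hf true) (h4 true)
          apply ins_inj _ _ h1
          · have := hf false
            grind
          · have := h4 false
            grind
        rwa [h5]
    · intro h
      exact ⟨by simp, Or.inr (Or.inr ⟨τ, rfl, h⟩)⟩
  · intro s hs hw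
    rw [hL] at hs
    rcases hs with ⟨_, h | ⟨j, σ, rfl, h⟩ | ⟨σ, rfl, h⟩⟩
    · exact h.2 hw
    · have := (Finset.mem_insert.mp hw).resolve_left (fun h => S.nww j h.symm)
      exact h.not_mem this
    · have := (Finset.mem_insert.mp hw).resolve_left (fun h => S.nww _ h.symm)
      have := (Finset.mem_insert.mp this).resolve_left (fun h => S.nww _ h.symm)
      exact S.wC (h.1 this)

theorem IsK2.cases {L : SComplex} (hL : IsK2 K w C H nw L) {s : Finset ℕ} (hs : s ∈ L.faces) :
    ((∀ i, nw i ∉ s) ∧ ((s ∈ K.faces ∧ w ∉ s) ∨ s = C)) ∨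
    ∃ i τ, (∀ i, nw i ∉ τ) ∧ s = insert (nw i) τ ∧ (Acol K w H i τ ∨ τ = C) := by
  by_cases h : ∀ i, nw i ∉ s
  · exact Or.inl ⟨h, (hL.free s h).1 hs⟩
  · push Not at h
    obtain ⟨i, hi⟩ := h
    have h2 := hL.nboth s hs i hi
    have hf : ∀ j, nw j ∉ s.erase (nw i) := by
      intro j
      cases i <;> cases j <;> simp_all
    refine Or.inr ⟨i, s.erase (nw i), hf, (Finset.insert_erase hi).symm, ?_⟩
    rwa [← hL.ins i _ hf, Finset.insert_erase hi]

theorem SplitOK.k2ext (S : SplitOK K w C H nw) {L : SComplex} (hL : IsK2 K w C H nw L) :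
    ∀ s ∈ L.faces, ∃ F ∈ L.faces, s ⊆ F ∧ F.card = 4 := by
  intro s hs
  have hA : ∀ i τ, Acol K w H i τ → ∃ F ∈ L.faces, insert (nw i) τ ⊆ F ∧ F.card = 4 := by
    intro i τ h
    obtain ⟨F, h1, h2, h3⟩ := h.full
    refine ⟨insert (nw i) F, (hL.ins i F (S.frA h3)).2 (Or.inl h3),
      Finset.insert_subset_insert _ h1, ?_⟩
    rw [Finset.card_insert_of_notMem (S.frA h3 i), h2]
  have hC : ∀ i, ∃ F ∈ L.faces, insert (nw i) C ⊆ F ∧ F.card = 4 := by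
    intro i
    refine ⟨insert (nw i) C, (hL.ins i C S.frC).2 (Or.inr rfl), Finset.Subset.refl _, ?_⟩
    rw [Finset.card_insert_of_notMem (S.frC i), S.C3]
  rcases hL.cases hs with ⟨hf, h | rfl⟩ | ⟨i, τ, hf, rfl, h | rfl⟩
  · obtain ⟨F, h1, h2, h3⟩ := S.hK.ext s h.1
    by_cases hw : w ∈ F
    · obtain ⟨i, hi⟩ := S.cover (τ := F.erase w) (by simp) (by rwa [Finset.insert_erase hw])
      obtain ⟨G, hG, hG1, hG2⟩ := hA i _ hi
      refine ⟨G, hG, ?_, hG2⟩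
      have := h.2
      grind
    · exact ⟨F, (hL.free F (S.fr h1)).2 (Or.inl ⟨h1, hw⟩), h2, h3⟩
  · obtain ⟨G, hG, hG1, hG2⟩ := hC true
    exact ⟨G, hG, (Finset.subset_insert _ _).trans hG1, hG2⟩
  · exact hA i τ h
  · exact hC i

theorem SplitOK.k2card (S : SplitOK K w C H nw) {L : SComplex} (hL : IsK2 K w C H nw L) :
    ∀ s ∈ L.faces, s.card ≤ 4 := by
  intro s hs
  rcases hL.cases hs with ⟨hf, h | rfl⟩ | ⟨i, τ, hf, rfl, h | rfl⟩
  · exact S.hK.card_le s h.1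
  · rw [S.C3]; omega
  · have := Finset.card_insert_le (nw i) τ
    have := h.card_le
    omega
  · have := Finset.card_insert_le (nw i) τ
    have := S.C3
    omega

theorem SplitOK.k2two (S : SplitOK K w C H nw) {L : SComplex} (hL : IsK2 K w C H nw L) :
    ∀ r ∈ L.faces, r.card = 3 → ∃ x y, x ≠ y ∧ ∀ z, (z ∉ r ∧ insert z r ∈ L.faces) ↔
      (z = x ∨ z = y) := by
  intro r hr hr3
  have hzw : ∀ z, z = w → insert z r ∉ L.faces := by
    rintro z rfl h
    exact hL.nw' _ h (by simp)
  have hCins : ∀ z s, s.card = 3 → z ∉ s → insert z s ≠ C := by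
    intro z s hs hz h
    have := S.C3
    rw [← h, Finset.card_insert_of_notMem hz] at this
    omega
  rcases hL.cases hr with ⟨hf, h | rfl⟩ | ⟨i, e, hf, rfl, h⟩
  · obtain ⟨x, y, hxy, hz⟩ := S.hK.two r h.1 hr3
    have hx := (hz x).2 (Or.inl rfl)
    have hy := (hz y).2 (Or.inr rfl)
    have hxn : ∀ i, nw i ≠ x := fun i hi => S.nwK i _ hx.2 (by simp [hi])
    have hyn : ∀ i, nw i ≠ y := fun i hi => S.nwK i _ hy.2 (by simp [hi])
    have hrC : r ≠ C := fun h' => S.CK (h' ▸ h.1)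
    refine ⟨if x = w then nw (H r) else x, if y = w then nw (H r) else y, ?_, ?_⟩
    · have := hxn (H r)
      have := hyn (H r)
      grind
    · intro z
      by_cases hzn : ∃ j, z = nw j
      · obtain ⟨j, rfl⟩ := hzn
        rw [hL.ins j r hf, or_iff_left hrC, Acol_three hr3]
        have e1 : insert w r ∈ K.faces ↔ (w = x ∨ w = y) := by
          rw [← hz w]; simp [h.2]
        have e2 : ∀ k, nw j = nw k ↔ k = j := fun k => ⟨fun h => (S.nwinj h).symm, fun h => h ▸ rfl⟩
        have e3 : ∀ (q : ℕ), (∀ i, nw i ≠ q) → ((nw j = if q = w then nw (H r) else q) ↔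
            (w = q ∧ H r = j)) := by
          intro q hq
          split_ifs with hqw
          · rw [e2]; simp [hqw]
          · constructor
            · intro h; exact absurd h (hq j)
            · intro h; exact absurd h.1.symm hqw
        rw [e1, e3 x hxn, e3 y hyn]
        have := hf j
        have := h.2
        tauto
      · push Not at hzn
        by_cases hzw' : z = w
        · have := hzw z hzw'
          have hh := S.nww (H r)
          grind
        · have e1 : (z ∉ r ∧ insert z r ∈ L.faces) ↔ (z ∉ r ∧ insert z r ∈ K.faces) := by
            apply and_congr_right
            intro hzr
            rw [hL.free _ (by intro j hj; rcases Finset.mem_insert.mp hj with h | h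
                              · exact hzn j h.symm
                              · exact hf j h)]
            rw [or_iff_left (hCins z r hr3 hzr)]
            have := h.2
            grind
          rw [e1, hz z]
          have := hzn (H r)
          grind
  · refine ⟨nw true, nw false, (S.nw_ne true), fun z => ?_⟩
    by_cases hzn : ∃ j, z = nw j
    · obtain ⟨j, rfl⟩ := hzn
      rw [hL.ins j r hf]
      have := hf j
      cases j <;> simp_all
    · push Not at hzn
      have e1 : ¬ (z ∉ r ∧ insert z r ∈ L.faces) := by
        rintro ⟨h1, h2⟩
        rw [hL.free _ (by intro j hj; rcases Finset.mem_insert.mp hj with h | h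
                          · exact hzn j h.symm
                          · exact hf j h)] at h2
        rcases h2 with h2 | h2
        · exact S.CK (mem_sub h2.1 (Finset.subset_insert _ _) S.Cne)
        · exact hCins z r hr3 h1 h2
      have := hzn true
      have := hzn false
      tauto
  · rw [Finset.card_insert_of_notMem (hf i)] at hr3
    have he2 : e.card = 2 := by omega
    have hA : Acol K w H i e := by
      rcases h with h | rfl
      · exact h
      · have := S.C3; omega
    obtain ⟨x, y, hxy, hz, hcol⟩ := S.edge_two he2 hA.not_mem hA.mem
    have key : ∀ z, (z ∉ insert (nw i) e ∧ insert z (insert (nw i) e) ∈ L.faces) ↔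
        (((z = x ∨ z = y) ∧ H (insert z e) = i) ∨ (z ∉ e ∧ insert z e = C)) := by
      intro z
      by_cases hzn : ∃ j, z = nw j
      · obtain ⟨j, rfl⟩ := hzn
        have h1 : ¬ (nw j ∉ insert (nw i) e ∧ insert (nw j) (insert (nw i) e) ∈ L.faces) := by
          rintro ⟨h1, h2⟩
          have hij : j = !i := by
            cases i <;> cases j <;> simp_all
          exact hL.nboth _ h2 i (by simp) (by simp [hij])
        have h2 : ¬ (nw j = x ∨ nw j = y) := by
          rw [← hz]
          rintro ⟨_, _, h⟩
          exact S.nwK j _ h (by simp)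
        have h3 : insert (nw j) e ≠ C := by
          intro h
          exact S.frC j (h ▸ Finset.mem_insert_self _ _)
        tauto
      · push Not at hzn
        rw [Finset.insert_comm, hL.ins i _ (by
          intro j hj; rcases Finset.mem_insert.mp hj with h | h
          · exact hzn j h.symm
          · exact hf j h), ← hz z]
        by_cases hze : z ∈ e
        · simp [hze]
        have h3 : (insert z e).card = 3 := by rw [Finset.card_insert_of_notMem hze, he2]
        rw [Acol_three h3]
        have := hzn i
        have := hA.not_mem
        grind
    simp only [key]
    have hex : H (insert x e) = i ∨ H (insert y e) = i := by
      obtain ⟨F, hs, hF3, hwF, hFK, hHF⟩ := hA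
      obtain ⟨z, hz1, hz2⟩ := Finset.exists_mem_notMem_of_card_lt_card (s := e) (t := F) (by omega)
      have hF : insert z e = F := by
        apply Finset.eq_of_subset_of_card_le (Finset.insert_subset hz1 hs)
        rw [Finset.card_insert_of_notMem hz2]; omega
      rw [← hF] at hFK hHF
      rcases (hz z).1 ⟨hz2, by grind, hFK⟩ with rfl | rfl
      · exact Or.inl hHF
      · exact Or.inr hHF
    by_cases heC : e ⊆ C
    · rw [decide_eq_true heC] at hcol
      obtain ⟨c, hc1, hc2⟩ := Finset.exists_mem_notMem_of_card_lt_card (s := e) (t := C)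
        (by have := S.C3; omega)
      have hcC : insert c e = C := by
        apply Finset.eq_of_subset_of_card_le (Finset.insert_subset hc1 heC)
        rw [Finset.card_insert_of_notMem hc2, S.C3]; omega
      have hcu : ∀ z, (z ∉ e ∧ insert z e = C) ↔ z = c := by
        intro z
        constructor
        · rintro ⟨h1, h2⟩
          have : z ∈ insert c e := by rw [hcC, ← h2]; simp
          grind
        · rintro rfl; exact ⟨hc2, hcC⟩
      have hnc : ∀ z, (z = x ∨ z = y) → z ≠ c := by
        rintro z hzx rfl
        have := ((hz z).2 hzx).2.2
        rw [hcC] at this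
        exact S.CK (mem_sub this (Finset.subset_insert _ _) S.Cne)
      have hxc := hnc x (Or.inl rfl)
      have hyc := hnc y (Or.inr rfl)
      rcases hex with hx | hx
      · refine ⟨x, c, hxc, fun z => ?_⟩
        rw [hcu]
        have : H (insert y e) ≠ i := by
          intro h; rw [h, hx] at hcol; simp at hcol
        grind
      · refine ⟨y, c, hyc, fun z => ?_⟩
        rw [hcu]
        have : H (insert x e) ≠ i := by
          intro h; rw [h, hx] at hcol; simp at hcol
        grind
    · rw [decide_eq_false heC] at hcol
      have hxi : H (insert x e) = i ∧ H (insert y e) = i := by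
        have : H (insert x e) = H (insert y e) := by simpa using hcol
        rw [this] at hex ⊢
        tauto
      refine ⟨x, y, hxy, fun z => ?_⟩
      have : insert z e ≠ C := by
        intro h; exact heC (h ▸ Finset.subset_insert _ _)
      grind

theorem SplitOK.k2conn_ins (S : SplitOK K w C H nw) {L : SComplex} (hL : IsK2 K w C H nw L)
    (i : Bool) (τ : Finset ℕ) (hf : ∀ j, nw j ∉ τ) (hτ : τ.card ≤ 1) :
    L.LConn (insert (nw i) τ) := by
  have key : ∀ a, a ∉ insert (nw i) τ → insert a (insert (nw i) τ) ∈ L.faces →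
      Acol K w H i (insert a τ) := by
    intro a ha h
    have hfa : ∀ j, nw j ∉ insert a τ := by
      intro j hj
      rcases Finset.mem_insert.mp hj with h1 | h1
      · subst h1
        have hij : j = !i := by
          cases i <;> cases j <;> simp_all
        exact hL.nboth _ h i (by simp) (by simp [hij])
      · exact hf j h1
    rw [Finset.insert_comm, hL.ins i _ hfa] at h
    refine h.resolve_right fun h => ?_
    have h3 := S.C3
    rw [← h] at h3
    have := Finset.card_insert_le a τ
    omega
  have adj : ∀ a b, a ∉ τ → b ∉ τ → (Acol K w H i (insert a (insert b τ)) ∨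
      insert a (insert b τ) ⊆ C) → L.LAdj (insert (nw i) τ) a b := by
    intro a b ha hb h
    have hB : Acol K w H i (insert a (insert b τ)) ∨ insert a (insert b τ) = C := by
      rcases h with h | h
      · exact Or.inl h
      · exact S.CsubA i h
    have hfr : ∀ j, nw j ∉ insert a (insert b τ) := by
      rcases hB with h | h
      · exact S.frA h
      · rw [h]; exact S.frC
    have h1 := (hL.ins i _ hfr).2 hB
    have h2 := hfr i
    exact ⟨by grind, by grind, mem_eq h1 (by grind)⟩
  have walk : ∀ y z, y ∉ τ → Acol K w H i (insert y τ) →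
      Relation.ReflTransGen (K.LAdj (insert w τ)) y z →
      (Acol K w H i (insert z τ) ∧ z ∉ τ ∧
          Relation.ReflTransGen (L.LAdj (insert (nw i) τ)) y z) ∨
      (∃ z0, z0 ∉ τ ∧ insert z0 τ ⊆ C ∧ Relation.ReflTransGen (L.LAdj (insert (nw i) τ)) y z0) := by
    intro y z hy hAy hp
    induction hp with
    | refl => exact Or.inl ⟨hAy, hy, Relation.ReflTransGen.refl⟩
    | @tail z z' _ h2 ih =>
      rcases ih with ⟨h3, h4, h5⟩ | h
      · obtain ⟨h6, h7, h8⟩ := h2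
        have hwz := h3.not_mem
        obtain ⟨j, hj⟩ := S.cover (τ := insert z (insert z' τ)) (by clear * - hwz h6 h7; grind) (mem_eq h8 (by grind))
        by_cases hij : j = i
        · subst hij
          refine Or.inl ⟨hj.down (by grind), by grind, h5.tail ?_⟩
          exact adj z z' h4 (by grind) (Or.inl hj)
        · have hij : j = !i := by cases i <;> cases j <;> simp_all
          subst hij
          refine Or.inr ⟨z, h4, (S.both h3 (hj.down (by grind))).1, h5⟩
      · exact Or.inr h
  intro a b ha hb haK hbK
  have hAa := key a ha haK
  have hAb := key b hb hbK
  have haw := hAa.not_mem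
  have hbw := hAb.not_mem
  have hp := S.hK.conn (insert w τ) (by have := Finset.card_insert_le w τ; omega) a b
    (by grind) (by grind) (mem_eq hAa.mem (by grind)) (mem_eq hAb.mem (by grind))
  rcases walk a b (by grind) hAa hp with h | ⟨z0, hz0, hz1, hz2⟩
  · exact h.2.2
  rcases walk b a (by grind) hAb (lpath_symm hp) with h | ⟨z0', hz0', hz1', hz2'⟩
  · exact lpath_symm h.2.2
  exact (hz2.tail (adj z0 z0' hz0 hz0' (Or.inr (by grind)))).trans (lpath_symm hz2')

theorem SplitOK.k2conn_free (S : SplitOK K w C H nw) {L : SComplex} (hL : IsK2 K w C H nw L)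
    (σ : Finset ℕ) (hf : ∀ j, nw j ∉ σ) (hσ : σ.card ≤ 2) (hw : w ∉ σ) :
    L.LConn σ := by
  have adjA : ∀ i z, z ∉ σ → (Acol K w H i (insert z σ) ∨ insert z σ ⊆ C) →
      L.LAdj σ (nw i) z := by
    intro i z hz h
    have hB : Acol K w H i (insert z σ) ∨ insert z σ = C := by
      rcases h with h | h
      · exact Or.inl h
      · exact S.CsubA i h
    have hfr : ∀ j, nw j ∉ insert z σ := by
      rcases hB with h | h
      · exact S.frA h
      · rw [h]; exact S.frC
    exact ⟨hf i, hz, (hL.ins i _ hfr).2 hB⟩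
  have ww : ∀ i j, Acol K w H i σ → Acol K w H j σ →
      Relation.ReflTransGen (L.LAdj σ) (nw i) (nw j) := by
    intro i j hi hj
    by_cases hij : i = j
    · rw [hij]
    have hij : j = !i := by cases i <;> cases j <;> simp_all
    subst hij
    have hs := S.both hi hj
    obtain ⟨c, hc, hcσ⟩ := Finset.exists_of_ssubset hs
    have hsub : insert c σ ⊆ C := Finset.insert_subset hc hs.1
    exact (Relation.ReflTransGen.single (adjA i c hcσ (Or.inr hsub))).tail
      (adjA _ c hcσ (Or.inr hsub)).symm
  let Lift : ℕ → ℕ → Prop := fun z z' => (z ≠ w ∧ z' = z) ∨ (z = w ∧ ∃ i, z' = nw i ∧ Acol K w H i σ)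
  have wz : ∀ a z, K.LAdj σ w z → z ≠ w → Lift w a → Relation.ReflTransGen (L.LAdj σ) a z := by
    intro a z h hz hl
    rcases hl with h' | ⟨_, i, rfl, hi⟩
    · exact absurd rfl h'.1
    obtain ⟨j, hj⟩ := S.cover (τ := insert z σ) (by grind) h.2.2
    exact (ww i j hi (hj.down (by grind))).tail (adjA j z h.2.1 (Or.inl hj))
  have step : ∀ z z' a b, K.LAdj σ z z' → Lift z a → Lift z' b →
      Relation.ReflTransGen (L.LAdj σ) a b := by
    intro z z' a b h ha hb
    by_cases hz : z = w
    · by_cases hz' : z' = w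
      · rcases ha with h' | ⟨_, i, rfl, hi⟩
        · exact absurd hz h'.1
        rcases hb with h' | ⟨_, j, rfl, hj⟩
        · exact absurd hz' h'.1
        exact ww i j hi hj
      · subst hz
        rcases hb with ⟨_, rfl⟩ | h'
        · exact wz a _ h hz' ha
        · exact absurd h'.1 hz'
    · rcases ha with ⟨_, rfl⟩ | h'
      swap
      · exact absurd h'.1 hz
      by_cases hz' : z' = w
      · subst hz'
        exact lpath_symm (wz b _ h.symm hz hb)
      · rcases hb with ⟨_, rfl⟩ | h'
        swap
        · exact absurd h'.1 hz'
        refine Relation.ReflTransGen.single ⟨h.1, h.2.1, (hL.free _ (S.fr h.2.2)).2 (Or.inl ⟨h.2.2, ?_⟩)⟩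
        grind
  have lift_ex : ∀ z, insert z σ ∈ K.faces → ∃ a, Lift z a := by
    intro z hz
    by_cases hzw : z = w
    · subst hzw
      obtain ⟨i, hi⟩ := S.cover hw hz
      exact ⟨nw i, Or.inr ⟨rfl, i, rfl, hi⟩⟩
    · exact ⟨z, Or.inl ⟨hzw, rfl⟩⟩
  have lift_same : ∀ z a b, Lift z a → Lift z b → Relation.ReflTransGen (L.LAdj σ) a b := by
    intro z a b ha hb
    rcases ha with ⟨h1, rfl⟩ | ⟨h1, i, rfl, hi⟩
    · rcases hb with ⟨h2, rfl⟩ | ⟨h2, j, rfl, hj⟩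
      · exact Relation.ReflTransGen.refl
      · exact absurd h2 h1
    · rcases hb with ⟨h2, rfl⟩ | ⟨h2, j, rfl, hj⟩
      · exact absurd h1 h2
      · exact ww i j hi hj
  have path : ∀ z z', Relation.ReflTransGen (K.LAdj σ) z z' → ∀ a b, Lift z a → Lift z' b →
      Relation.ReflTransGen (L.LAdj σ) a b := by
    intro z z' hp
    induction hp with
    | refl => exact fun a b => lift_same z a b
    | @tail y y' _ h2 ih =>
      intro a b ha hb
      obtain ⟨c, hc⟩ := lift_ex y h2.left_mem
      exact (ih a c ha hc).trans (step y y' c b h2 hc hb)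
  have vert : ∀ a, a ∉ σ → insert a σ ∈ L.faces → ∃ z a', Lift z a' ∧ z ∉ σ ∧ insert z σ ∈ K.faces ∧
      Relation.ReflTransGen (L.LAdj σ) a a' := by
    intro a ha h
    by_cases hn : ∃ i, a = nw i
    · obtain ⟨i, rfl⟩ := hn
      rw [hL.ins i σ hf] at h
      have hA := h.resolve_right (by rintro rfl; have := S.C3; omega)
      exact ⟨w, nw i, Or.inr ⟨rfl, i, rfl, hA⟩, hw, hA.mem, Relation.ReflTransGen.refl⟩
    · push Not at hn
      rw [hL.free _ (by intro j hj; rcases Finset.mem_insert.mp hj with h | h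
                        · exact hn j h.symm
                        · exact hf j h)] at h
      rcases h with h | h
      · exact ⟨a, a, Or.inl ⟨by grind, rfl⟩, ha, h.1, Relation.ReflTransGen.refl⟩
      · have hss : σ ⊂ C := by
          rw [← h]; exact Finset.ssubset_insert ha
        have hA := S.of_C true hss
        exact ⟨w, nw true, Or.inr ⟨rfl, true, rfl, hA⟩, hw, hA.mem,
          Relation.ReflTransGen.single (adjA true a ha (Or.inr h.le)).symm⟩
  intro a b ha hb haL hbL
  obtain ⟨z, a', h1, h2, h3, h4⟩ := vert a ha haL
  obtain ⟨z', b', h1', h2', h3', h4'⟩ := vert b hb hbL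
  exact h4.trans ((path z z' (S.hK.conn σ hσ z z' h2 h2' h3 h3') a' b' h1 h1').trans (lpath_symm h4'))

theorem SplitOK.k2npm (S : SplitOK K w C H nw) {L : SComplex} (hL : IsK2 K w C H nw L) :
    L.NPM where
  ne := ⟨C, (hL.free C S.frC).2 (Or.inr rfl)⟩
  ext := S.k2ext hL
  card_le := S.k2card hL
  two := S.k2two hL
  conn := by
    intro σ hσ
    by_cases hw : w ∈ σ
    · intro a b _ _ h
      exact absurd (Finset.mem_insert_of_mem hw) (hL.nw' _ h)
    by_cases h : ∀ i, nw i ∉ σ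
    · exact S.k2conn_free hL σ h hσ hw
    · push Not at h
      obtain ⟨i, hi⟩ := h
      by_cases h2 : nw (!i) ∈ σ
      · intro a b _ _ h
        exact absurd (Finset.mem_insert_of_mem h2) (hL.nboth _ h i (Finset.mem_insert_of_mem hi))
      have hf : ∀ j, nw j ∉ σ.erase (nw i) := by
        intro j
        cases i <;> cases j <;> simp_all
      have := S.k2conn_ins hL i (σ.erase (nw i)) hf
        (by rw [Finset.card_erase_of_mem hi]; omega)
      rwa [Finset.insert_erase hi] at this

theorem lk_mem1 {K : SComplex} {u : ℕ} {γ : Finset ℕ} (hγ : γ.Nonempty) :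
    γ ∈ (K.lk {u}).faces ↔ u ∉ γ ∧ insert u γ ∈ K.faces := by
  rw [mem_lk' hγ, Finset.disjoint_singleton_right, Finset.union_comm, ← Finset.insert_eq]

theorem lk_mem2 {K : SComplex} {u v : ℕ} {γ : Finset ℕ} (hγ : γ.Nonempty) :
    γ ∈ (K.lk {u, v}).faces ↔ u ∉ γ ∧ v ∉ γ ∧ insert u (insert v γ) ∈ K.faces := by
  rw [mem_lk' hγ]
  have : γ ∪ {u, v} = insert u (insert v γ) := by ext; simp
  rw [this]
  simp [and_assoc]

theorem cone_eq {K : SComplex} (hK : K.NPM) {w : ℕ} (hw : {w} ∈ K.faces)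
    {D : Finset (Finset ℕ)} (hD : ∀ s, s ∈ D ↔ s ∈ K.faces ∧ w ∉ s) :
    K.faces = D ∪ coneFaces w (bdryFaces D 3) := by
  have hb : ∀ s, s ∈ bdryFaces D 3 ↔ s ∈ D ∧ insert w s ∈ K.faces := by
    intro s
    rw [bdryFaces, Finset.mem_filter]
    apply and_congr_right
    intro hs
    constructor
    · rintro ⟨r, hr, hsr, hr3, h1⟩
      obtain ⟨x, y, hxy, hz⟩ := hK.two r ((hD r).1 hr).1 hr3
      have hwr : insert w r ∈ K.faces := by
        by_contra hwr
        have hx := (hz x).2 (Or.inl rfl)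
        have hy := (hz y).2 (Or.inr rfl)
        have hwr' := ((hD r).1 hr).2
        have hxD : insert x r ∈ D := (hD _).2 ⟨hx.2, by grind⟩
        have hyD : insert y r ∈ D := (hD _).2 ⟨hy.2, by grind⟩
        rw [Finset.card_eq_one] at h1
        obtain ⟨a, ha⟩ := h1
        have h2 : insert x r ∈ ({a} : Finset (Finset ℕ)) := by
          rw [← ha, Finset.mem_filter]
          exact ⟨hxD, by rw [Finset.card_insert_of_notMem hx.1, hr3], Finset.subset_insert _ _⟩
        have h3 : insert y r ∈ ({a} : Finset (Finset ℕ)) := by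
          rw [← ha, Finset.mem_filter]
          exact ⟨hyD, by rw [Finset.card_insert_of_notMem hy.1, hr3], Finset.subset_insert _ _⟩
        rw [Finset.mem_singleton] at h2 h3
        have : x ∈ insert y r := by rw [h3, ← h2]; simp
        have := hx.1
        grind
      exact mem_sub hwr (Finset.insert_subset_insert _ hsr) (by simp)
    · intro h
      have hws := ((hD s).1 hs).2
      obtain ⟨F, hF, hsF, hF4⟩ := hK.ext _ h
      have hwF : w ∈ F := hsF (by simp)
      have hsr : s ⊆ F.erase w := by
        intro z hz
        rw [Finset.mem_erase]
        exact ⟨fun h => hws (h ▸ hz), hsF (by simp [hz])⟩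
      have hr3 : (F.erase w).card = 3 := by rw [Finset.card_erase_of_mem hwF, hF4]
      have hrK : F.erase w ∈ K.faces :=
        mem_sub hF (Finset.erase_subset _ _) (by rw [← Finset.card_pos, hr3]; omega)
      refine ⟨F.erase w, (hD _).2 ⟨hrK, by simp⟩, hsr, hr3, ?_⟩
      obtain ⟨x, y, hxy, hz⟩ := hK.two _ hrK hr3
      have hw' := (hz w).1 ⟨by simp, by rwa [Finset.insert_erase hwF]⟩
      obtain ⟨y', hy', hyu⟩ : ∃ y', y' ≠ w ∧ ∀ z, (z ∉ F.erase w ∧ insert z (F.erase w) ∈ K.faces) ↔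
          (z = w ∨ z = y') := by
        rcases hw' with rfl | rfl
        · exact ⟨y, hxy.symm, hz⟩
        · exact ⟨x, hxy, fun z => by rw [hz, or_comm]⟩
      have hyy := (hyu y').2 (Or.inr rfl)
      rw [Finset.card_eq_one]
      refine ⟨insert y' (F.erase w), ?_⟩
      ext G
      rw [Finset.mem_filter, Finset.mem_singleton, hD]
      constructor
      · rintro ⟨⟨h1, h2⟩, h3, h4⟩
        obtain ⟨z, hz1, hz2⟩ := Finset.exists_mem_notMem_of_card_lt_card
          (s := F.erase w) (t := G) (by omega)
        have hG : insert z (F.erase w) = G := by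
          apply Finset.eq_of_subset_of_card_le (Finset.insert_subset hz1 h4)
          rw [Finset.card_insert_of_notMem hz2]; omega
        rcases (hyu z).1 ⟨hz2, by rwa [hG]⟩ with rfl | rfl
        · exact absurd hz1 h2
        · exact hG.symm
      · rintro rfl
        refine ⟨⟨hyy.2, by grind⟩, ?_, Finset.subset_insert _ _⟩
        rw [Finset.card_insert_of_notMem hyy.1, hr3]
  ext s
  simp only [coneFaces, Finset.mem_union, Finset.mem_image, Finset.mem_singleton, hb]
  constructor
  · intro hs
    by_cases hws : w ∈ s
    · right
      by_cases hs1 : s = {w}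
      · exact Or.inr hs1
      · left; right
        refine ⟨s.erase w, ⟨(hD _).2 ⟨mem_sub hs (Finset.erase_subset _ _) ?_, by simp⟩, ?_⟩,
          Finset.insert_erase hws⟩
        · rw [Finset.nonempty_iff_ne_empty]
          intro h
          apply hs1
          rw [← Finset.insert_erase hws, h]
          rfl
        · rwa [Finset.insert_erase hws]
    · exact Or.inl ((hD s).2 ⟨hs, hws⟩)
  · rintro (h | (h | ⟨a, h, rfl⟩) | rfl)
    · exact ((hD s).1 h).1
    · exact ((hD s).1 h.1).1
    · exact h.2
    · exact hw

theorem count_star (A : Finset (Finset ℕ)) (w : ℕ) (X : Finset ℕ)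
    (hX : ∀ x, x ∈ X ↔ x ≠ w ∧ {w, x} ∈ A) :
    (A.filter fun s => s.card = 2).card =
      ((A.filter fun s => w ∉ s).filter fun s => s.card = 2).card + X.card := by
  rw [← Finset.card_filter_add_card_filter_not (s := A.filter fun s => s.card = 2) (fun s => w ∉ s)]
  congr 1
  · rw [Finset.filter_comm]
  · have : (Finset.filter (fun a => ¬ w ∉ a) (Finset.filter (fun s => s.card = 2) A)) =
        X.image (fun x => ({w, x} : Finset ℕ)) := by
      ext s
      simp only [Finset.mem_filter, Finset.mem_image, not_not, hX]
      constructor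
      · rintro ⟨⟨h1, h2⟩, h3⟩
        obtain ⟨x, hx⟩ := Finset.card_eq_one.mp (show (s.erase w).card = 1 by
          rw [Finset.card_erase_of_mem h3, h2])
        have hs : ({w, x} : Finset ℕ) = s := by
          rw [← Finset.insert_erase h3, hx]
        have : x ∈ s.erase w := by rw [hx]; simp
        exact ⟨x, ⟨(Finset.mem_erase.mp this).1, by rwa [hs]⟩, hs⟩
      · rintro ⟨x, ⟨h1, h2⟩, rfl⟩
        exact ⟨⟨h2, Finset.card_pair h1.symm⟩, by simp⟩
    rw [this, Finset.card_image_of_injOn]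
    intro x hx y hy h
    have hx' := ((hX x).1 hx).1
    have : x ∈ ({w, y} : Finset ℕ) := by
      have h : ({w, x} : Finset ℕ) = {w, y} := h
      rw [← h]; simp
    grind

theorem count_pt (A : Finset (Finset ℕ)) (w : ℕ) (hw : {w} ∈ A) :
    (A.filter fun s => s.card = 1).card =
      ((A.filter fun s => w ∉ s).filter fun s => s.card = 1).card + 1 := by
  rw [← Finset.card_filter_add_card_filter_not (s := A.filter fun s => s.card = 1) (fun s => w ∉ s)]
  congr 1
  · rw [Finset.filter_comm]
  · rw [Finset.card_eq_one]
    refine ⟨{w}, ?_⟩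
    ext s
    simp only [Finset.mem_filter, Finset.mem_singleton, not_not]
    constructor
    · rintro ⟨⟨h1, h2⟩, h3⟩
      obtain ⟨x, rfl⟩ := Finset.card_eq_one.mp h2
      grind
    · rintro rfl
      exact ⟨⟨hw, by simp⟩, by simp⟩

theorem SplitOK.contr (S : SplitOK K w C H nw) {M : SComplex} (hM : IsM K w C H nw M) :
    EdgeContraction M K := by
  have hne : nw false ≠ nw true := S.nw_ne false
  have fr2 : ∀ γ : Finset ℕ, nw false ∉ γ → nw true ∉ γ → ∀ i, nw i ∉ γ := by
    intro γ h1 h2 i; cases i <;> assumption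
  refine ⟨nw false, nw true, ?_, hne, ?_, w, ?_, ?_⟩
  · exact (hM.ins2 ∅ (by simp)).2 (Finset.empty_ssubset.mpr S.Cne)
  · ext γ
    rw [Finset.mem_inter]
    by_cases hγ : γ.Nonempty
    · rw [lk_mem1 hγ, lk_mem1 hγ, lk_mem2 hγ]
      by_cases h1 : nw false ∈ γ
      · simp [h1]
      by_cases h2 : nw true ∈ γ
      · simp [h2]
      have hf := fr2 γ h1 h2
      rw [hM.ins _ _ hf, hM.ins _ _ hf, hM.ins2 _ hf]
      simp only [h1, h2, not_false_eq_true, true_and]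
      exact ⟨fun h => S.both h.1 h.2, fun h => ⟨S.of_C _ h, S.of_C _ h⟩⟩
    · exact ⟨fun h => absurd (face_ne h.1) hγ, fun h => absurd (face_ne h) hγ⟩
  · rw [mem_vertexSet]
    rintro ⟨s, hs, hw⟩
    exact hM.nw' s hs hw
  · apply cone_eq S.hK S.wK
    intro s
    rw [Finset.mem_filter]
    constructor
    · rintro ⟨h1, h2, h3⟩
      exact (hM.free s (fr2 s h2 h3)).1 h1
    · intro h
      exact ⟨(hM.free s (S.fr h.1)).2 h, S.fr h.1 _, S.fr h.1 _⟩

theorem SplitOK.bist (S : SplitOK K w C H nw) {M L : SComplex} (hM : IsM K w C H nw M)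
    (hL : IsK2 K w C H nw L) : BistellarTwoMove M L := by
  have hne : nw false ≠ nw true := S.nw_ne false
  have fr2 : ∀ γ : Finset ℕ, nw false ∉ γ → nw true ∉ γ → ∀ i, nw i ∉ γ := by
    intro γ h1 h2 i; cases i <;> assumption
  obtain ⟨a, b, c, _, _, _, hCe⟩ := Finset.card_eq_three.mp S.C3
  refine ⟨nw false, nw true, a, b, c, ?_, hne, ?_⟩
  · exact (hM.ins2 ∅ (by simp)).2 (Finset.empty_ssubset.mpr S.Cne)
  rw [← hCe]
  refine ⟨S.C3, S.frC _, S.frC _, ?_, ?_, ?_⟩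
  · ext γ
    rw [properFaces, Finset.mem_filter, Finset.mem_powerset]
    by_cases hγ : γ.Nonempty
    · rw [lk_mem2 hγ]
      constructor
      · rintro ⟨h1, h2, h3⟩
        rw [hM.ins2 _ (fr2 γ h1 h2)] at h3
        exact ⟨h3.1, hγ.ne_empty, h3.ne⟩
      · rintro ⟨h1, h2, h3⟩
        have hf : ∀ i, nw i ∉ γ := fun i hi => S.frC i (h1 hi)
        exact ⟨hf _, hf _, (hM.ins2 _ hf).2 (Finset.ssubset_iff_subset_ne.mpr ⟨h1, h3⟩)⟩
    · exact ⟨fun h => absurd (face_ne h) hγ,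
        fun h => absurd (Finset.nonempty_iff_ne_empty.mpr h.2.1) hγ⟩
  · rw [hM.free C S.frC]
    exact fun h => S.CK h.1
  · ext s
    simp only [Finset.mem_union, Finset.mem_filter, simplexFaces, Finset.mem_powerset]
    constructor
    · intro hs
      rcases hL.cases hs with ⟨hf, h | rfl⟩ | ⟨i, τ, hf, rfl, h | rfl⟩
      · refine Or.inl (Or.inl ⟨(hM.free s hf).2 h, fun h' => hf false (h' (by simp))⟩)
      · exact Or.inr ⟨Finset.subset_insert _ _, S.Cne.ne_empty⟩
      · refine Or.inl (Or.inl ⟨(hM.ins i τ hf).2 h, fun h' => ?_⟩)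
        have h1 : nw false ∈ insert (nw i) τ := h' (by simp)
        have h2 : nw true ∈ insert (nw i) τ := h' (by simp)
        have := hf true
        have := hf false
        grind
      · cases i
        · exact Or.inl (Or.inr ⟨Finset.Subset.refl _, by simp⟩)
        · exact Or.inr ⟨Finset.Subset.refl _, by simp⟩
    · have hC : ∀ i, ∀ s, s ⊆ insert (nw i) C → s ≠ ∅ → s ∈ L.faces := by
        intro i s h1 h2
        exact mem_sub ((hL.ins i C S.frC).2 (Or.inr rfl)) h1 (Finset.nonempty_iff_ne_empty.mpr h2)
      have hA : ∀ i, nw i ∈ s → (∀ j, nw j ∉ s.erase (nw i)) → s ∈ M.faces → s ∈ L.faces := by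
        intro i hi hf h
        rw [← Finset.insert_erase hi] at h ⊢
        rw [hM.ins i _ hf] at h
        exact (hL.ins i _ hf).2 (Or.inl h)
      rintro ((⟨h1, h2⟩ | ⟨h1, h2⟩) | ⟨h1, h2⟩)
      · by_cases h3 : nw false ∈ s
        · exact hA false h3 (fr2 _ (by grind) (by grind)) h1
        · by_cases h4 : nw true ∈ s
          · exact hA true h4 (fr2 _ (by grind) (by grind)) h1
          · have hf := fr2 s h3 h4
            rw [hM.free s hf] at h1
            exact (hL.free s hf).2 (Or.inl h1)
      · exact hC _ s h1 h2
      · exact hC _ s h1 h2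

theorem SplitOK.g2lt (S : SplitOK K w C H nw) {L : SComplex} (hL : IsK2 K w C H nw L) :
    L.g2 < K.g2 := by
  classical
  have hne : nw false ≠ nw true := S.nw_ne false
  have fr2 : ∀ γ : Finset ℕ, nw false ∉ γ → nw true ∉ γ → ∀ i, nw i ∉ γ := by
    intro γ h1 h2 i; cases i <;> assumption
  have hCc : ∀ τ : Finset ℕ, τ.card < 3 → τ ≠ C := by
    rintro τ h rfl
    have := S.C3
    omega
  have hfx : ∀ x i, x ≠ nw i → ∀ j, j ≠ i → x ≠ nw j → ∀ k, nw k ∉ ({x} : Finset ℕ) := by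
    intro x i h1 j hj h2 k
    rw [Finset.mem_singleton]
    intro h
    cases i <;> cases j <;> cases k <;> simp_all
  let X : Bool → Finset ℕ := fun i => K.vertexSet.filter fun x => Acol K w H i {x}
  have hX : ∀ i x, x ∈ X i ↔ Acol K w H i {x} := by
    intro i x
    simp only [X, Finset.mem_filter, and_iff_right_iff_imp]
    intro h
    exact sub_vertexSet h.mem (by simp)
  have hLe : ∀ i x, (x ≠ nw i ∧ x ≠ nw (!i) ∧ {nw i, x} ∈ L.faces) ↔ Acol K w H i {x} := by
    intro i x
    constructor
    · rintro ⟨h1, h2, h3⟩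
      have hf := hfx x i h1 (!i) (by simp) h2
      exact ((hL.ins i _ hf).1 h3).resolve_right (hCc _ (by simp))
    · intro h
      have hf := S.frA h
      refine ⟨fun h' => hf i (by simp [h']), fun h' => hf (!i) (by simp [h']),
        (hL.ins i _ hf).2 (Or.inl h)⟩
  have hXC : X false ∩ X true = C := by
    ext x
    rw [Finset.mem_inter, hX, hX]
    constructor
    · rintro ⟨h1, h2⟩
      have := (S.both h1 h2).1
      exact this (by simp)
    · intro h
      have : {x} ⊂ C := by
        rw [Finset.ssubset_iff_subset_ne]
        exact ⟨by simpa using h, hCc _ (by simp)⟩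
      exact ⟨S.of_C _ this, S.of_C _ this⟩
  have hcard := Finset.card_union_add_card_inter (X false) (X true)
  rw [hXC, S.C3] at hcard
  have k1 := count_star K.faces w (X false ∪ X true) (by
    intro x
    rw [Finset.mem_union, hX, hX]
    constructor
    · rintro (h | h)
      · exact ⟨fun h' => h.not_mem (by simp [h']), h.mem⟩
      · exact ⟨fun h' => h.not_mem (by simp [h']), h.mem⟩
    · rintro ⟨h1, h2⟩
      obtain ⟨i, hi⟩ := S.cover (τ := {x}) (by simpa using h1.symm) h2
      cases i
      · exact Or.inl hi
      · exact Or.inr hi)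
  have l1 := count_star L.faces (nw false) (X false) (by
    intro x
    rw [hX, ← hLe]
    constructor
    · exact fun h => ⟨h.1, h.2.2⟩
    · rintro ⟨h1, h2⟩
      refine ⟨h1, ?_, h2⟩
      rintro rfl
      exact hL.nboth _ h2 false (by simp) (by simp))
  have l2 := count_star (L.faces.filter fun s => nw false ∉ s) (nw true) (X true) (by
    intro x
    rw [hX, ← hLe, Finset.mem_filter]
    constructor
    · rintro ⟨h1, h2, h3⟩
      refine ⟨h1, h3, ?_⟩
      have h2 : x ≠ nw false := h2
      grind
    · rintro ⟨h1, h2, h3⟩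
      refine ⟨h1, ?_, h2⟩
      show x ≠ nw false
      grind)
  have kp := count_pt K.faces w S.wK
  have hvx : ∀ i, {nw i} ∈ L.faces := by
    intro i
    have := (hL.ins i C S.frC).2 (Or.inr rfl)
    exact mem_sub this (by simp) (by simp)
  have lp1 := count_pt L.faces (nw false) (hvx false)
  have lp2 := count_pt (L.faces.filter fun s => nw false ∉ s) (nw true) (by
    rw [Finset.mem_filter]
    exact ⟨hvx true, by simpa using hne⟩)
  have heq : ∀ n, n < 3 → (((L.faces.filter fun s => nw false ∉ s).filter fun s => nw true ∉ s).filter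
      fun s => s.card = n) = ((K.faces.filter fun s => w ∉ s).filter fun s => s.card = n) := by
    intro n hn
    ext s
    simp only [Finset.mem_filter]
    constructor
    · rintro ⟨⟨⟨h1, h2⟩, h3⟩, h4⟩
      rw [hL.free s (fr2 s h2 h3), or_iff_left (hCc s (by omega))] at h1
      exact ⟨h1, h4⟩
    · rintro ⟨h1, h4⟩
      have hf := S.fr h1.1
      exact ⟨⟨⟨(hL.free s hf).2 (Or.inl h1), hf _⟩, hf _⟩, h4⟩
  rw [heq 2 (by omega)] at l2
  rw [heq 1 (by omega)] at lp2
  have e1 : K.fnum 1 = (K.faces.filter fun s => s.card = 2).card := rfl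
  have e2 : K.fnum 0 = (K.faces.filter fun s => s.card = 1).card := rfl
  have e3 : L.fnum 1 = (L.faces.filter fun s => s.card = 2).card := rfl
  have e4 : L.fnum 0 = (L.faces.filter fun s => s.card = 1).card := rfl
  unfold g2
  omega

theorem no_missing {K : SComplex} (hR : InClassR K) {w : ℕ} {C : Finset ℕ}
    (hsph : K.HasSphereLink 3 w) (C3 : C.card = 3) (wC : w ∉ C)
    (hC : ∀ x ∈ C, ∀ y ∈ C, ({w, x, y} : Finset ℕ) ∈ K.faces) (CK : C ∉ K.faces) : False := by
  have hK := NPM.of_normal hR.1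
  obtain ⟨H, hH⟩ := hK.coloring C3 wC hC hsph
  obtain ⟨n, hn⟩ := Finset.exists_nat_subset_range K.vertexSet
  have hn' : ∀ m, n ≤ m → ∀ s ∈ K.faces, m ∉ s := by
    intro m hm s hs h
    have := hn (sub_vertexSet hs h)
    rw [Finset.mem_range] at this
    omega
  have S : SplitOK K w C H (fun i => if i then n else n + 1) :=
    ⟨hK, C3, wC, hC, CK, hH, by intro i; cases i <;> simp, by
      intro i
      cases i
      · exact hn' _ (by simp)
      · exact hn' _ (by simp)⟩
  obtain ⟨M, hM⟩ := S.existsM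
  obtain ⟨L, hL⟩ := S.existsK2
  have := hR.2.2.2.2 L (S.k2npm hL).normal
    (Or.inr (Or.inr (Or.inl ⟨M, S.contr hM, S.bist hM hL⟩)))
  have := S.g2lt hL
  omega

/-- The data for contracting the edge `uv` to the new vertex `w`. -/
structure CtrOK (K : SComplex) (u v w : ℕ) : Prop where
  hK : K.NPM
  ne : u ≠ v
  huv : ({u, v} : Finset ℕ) ∈ K.faces
  hl : ∀ γ, u ∉ γ → v ∉ γ → insert u γ ∈ K.faces → insert v γ ∈ K.faces →
    insert u (insert v γ) ∈ K.faces
  wK : ∀ s ∈ K.faces, w ∉ s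

theorem CtrOK.symm {K : SComplex} {u v w : ℕ} (S : CtrOK K u v w) : CtrOK K v u w :=
  ⟨S.hK, S.ne.symm, by rw [Finset.pair_comm]; exact S.huv, fun γ h1 h2 h3 h4 => by
    rw [Finset.insert_comm]; exact S.hl γ h2 h1 h4 h3, S.wK⟩

/-- Faces of the link of the new vertex. -/
def PW (K : SComplex) (u v : ℕ) (τ : Finset ℕ) : Prop :=
  u ∉ τ ∧ v ∉ τ ∧ (insert u τ ∈ K.faces ∨ insert v τ ∈ K.faces)

/-- `L` is the contracted complex. -/
structure IsK1 (K : SComplex) (u v w : ℕ) (L : SComplex) : Prop where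
  free : ∀ τ, w ∉ τ → (τ ∈ L.faces ↔ τ ∈ K.faces ∧ u ∉ τ ∧ v ∉ τ)
  ins : ∀ τ, w ∉ τ → (insert w τ ∈ L.faces ↔ PW K u v τ)

theorem IsK1.symm {K : SComplex} {u v w : ℕ} {L : SComplex} (h : IsK1 K u v w L) :
    IsK1 K v u w L := by
  refine ⟨fun τ hτ => ?_, fun τ hτ => ?_⟩
  · rw [h.free τ hτ]; tauto
  · rw [h.ins τ hτ]; unfold PW; tauto

theorem PW.fr {K : SComplex} {u v w : ℕ} (S : CtrOK K u v w) {τ : Finset ℕ} (h : PW K u v τ) :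
    w ∉ τ := by
  intro hw
  rcases h.2.2 with h | h <;> exact S.wK _ h (by simp [hw])

theorem PW.mem {K : SComplex} {u v : ℕ} {τ : Finset ℕ} (h : PW K u v τ)
    (hne : τ.Nonempty) : τ ∈ K.faces := by
  rcases h.2.2 with h | h <;> exact mem_sub h (Finset.subset_insert _ _) hne

theorem PW.down {K : SComplex} {u v : ℕ} {τ τ' : Finset ℕ} (h : PW K u v τ) (hs : τ' ⊆ τ) :
    PW K u v τ' := by
  refine ⟨fun h' => h.1 (hs h'), fun h' => h.2.1 (hs h'), ?_⟩
  rcases h.2.2 with h | h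
  · exact Or.inl (mem_sub h (Finset.insert_subset_insert _ hs) (by simp))
  · exact Or.inr (mem_sub h (Finset.insert_subset_insert _ hs) (by simp))

theorem CtrOK.exists {K : SComplex} {u v w : ℕ} (S : CtrOK K u v w) : ∃ L, IsK1 K u v w L := by
  obtain ⟨L, hL⟩ := exists_complex (insert w K.vertexSet)
    (fun s => (s ∈ K.faces ∧ u ∉ s ∧ v ∉ s) ∨ ∃ τ, s = insert w τ ∧ PW K u v τ) (by
      rintro s t (h | ⟨τ, rfl, h⟩) hts htn
      · exact Or.inl ⟨mem_sub h.1 hts htn, fun h' => h.2.1 (hts h'), fun h' => h.2.2 (hts h')⟩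
      · by_cases hw : w ∈ t
        · exact Or.inr ⟨t.erase w, (Finset.insert_erase hw).symm, h.down (by grind)⟩
        · have := h.down (τ' := t) (by grind)
          exact Or.inl ⟨this.mem htn, this.1, this.2.1⟩) (by
      rintro s (h | ⟨τ, rfl, h⟩)
      · exact (sub_vertexSet h.1).trans (Finset.subset_insert _ _)
      · apply Finset.insert_subset_insert
        rcases h.2.2 with h | h <;> exact (Finset.subset_insert _ _).trans (sub_vertexSet h))
  refine ⟨L, fun τ hτ => ?_, fun τ hτ => ?_⟩
  · rw [hL]
    constructor
    · rintro ⟨_, h | ⟨σ, rfl, h⟩⟩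
      · exact h
      · simp at hτ
    · intro h
      exact ⟨face_ne h.1, Or.inl h⟩
  · rw [hL]
    constructor
    · rintro ⟨_, h | ⟨σ, h1, h⟩⟩
      · exact absurd (Finset.mem_insert_self _ _) (S.wK _ h.1)
      · rwa [ins_inj hτ (h.fr S) h1]
    · intro h
      exact ⟨by simp, Or.inr ⟨τ, rfl, h⟩⟩

theorem IsK1.cases {K : SComplex} {u v w : ℕ} {L : SComplex} (hL : IsK1 K u v w L) {s : Finset ℕ}
    (hs : s ∈ L.faces) : (w ∉ s ∧ s ∈ K.faces ∧ u ∉ s ∧ v ∉ s) ∨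
      ∃ τ, w ∉ τ ∧ s = insert w τ ∧ PW K u v τ := by
  by_cases hw : w ∈ s
  · right
    refine ⟨s.erase w, by simp, (Finset.insert_erase hw).symm, ?_⟩
    rw [← hL.ins _ (by simp), Finset.insert_erase hw]
    exact hs
  · exact Or.inl ⟨hw, (hL.free s hw).1 hs⟩

theorem NPM.other {K : SComplex} (hK : K.NPM) {r : Finset ℕ} (hr3 : r.card = 3) {a : ℕ}
    (ha : a ∉ r) (haK : insert a r ∈ K.faces) : ∃ b, b ≠ a ∧ ∀ z, (z ∉ r ∧ insert z r ∈ K.faces) ↔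
      (z = a ∨ z = b) := by
  obtain ⟨x, y, hxy, hz⟩ := hK.two r (mem_sub haK (Finset.subset_insert _ _)
    (by rw [← Finset.card_pos]; omega)) hr3
  rcases (hz a).1 ⟨ha, haK⟩ with rfl | rfl
  · exact ⟨y, hxy.symm, hz⟩
  · exact ⟨x, hxy, fun z => by rw [hz, or_comm]⟩

theorem CtrOK.extA {K : SComplex} {u v w : ℕ} (S : CtrOK K u v w) {τ : Finset ℕ} (hu : u ∉ τ)
    (hv : v ∉ τ) (h : insert u τ ∈ K.faces) :
    ∃ T, τ ⊆ T ∧ T.card = 3 ∧ u ∉ T ∧ v ∉ T ∧ insert u T ∈ K.faces := by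
  obtain ⟨F, hF, hs, hF4⟩ := S.hK.ext _ h
  have huF : u ∈ F := hs (by simp)
  have hne := S.ne
  have hτF : τ ⊆ F := (Finset.subset_insert _ _).trans hs
  by_cases hvF : v ∈ F
  · obtain ⟨b, hb, hz⟩ := S.hK.other (r := F.erase v) (a := v)
      (by rw [Finset.card_erase_of_mem hvF, hF4]) (by simp) (by rwa [Finset.insert_erase hvF])
    have hb' := (hz b).2 (Or.inr rfl)
    refine ⟨insert b ((F.erase v).erase u), by grind, ?_, by grind, by grind, ?_⟩
    · rw [Finset.card_insert_of_notMem (by grind), Finset.card_erase_of_mem (by grind),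
        Finset.card_erase_of_mem hvF, hF4]
    · exact mem_eq hb'.2 (by grind)
  · refine ⟨F.erase u, by grind, by rw [Finset.card_erase_of_mem huF, hF4], by simp, by grind, ?_⟩
    rwa [Finset.insert_erase huF]

theorem CtrOK.extB {K : SComplex} {u v w : ℕ} (S : CtrOK K u v w) {L : SComplex}
    (hL : IsK1 K u v w L) {τ : Finset ℕ} (h : PW K u v τ) :
    ∃ F ∈ L.faces, insert w τ ⊆ F ∧ F.card = 4 := by
  have key : ∃ T, τ ⊆ T ∧ T.card = 3 ∧ PW K u v T := by
    rcases h.2.2 with h' | h'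
    · obtain ⟨T, h1, h2, h3, h4, h5⟩ := S.extA h.1 h.2.1 h'
      exact ⟨T, h1, h2, h3, h4, Or.inl h5⟩
    · obtain ⟨T, h1, h2, h3, h4, h5⟩ := S.symm.extA h.2.1 h.1 h'
      exact ⟨T, h1, h2, h4, h3, Or.inr h5⟩
  obtain ⟨T, h1, h2, h3⟩ := key
  refine ⟨insert w T, (hL.ins T (h3.fr S)).2 h3, Finset.insert_subset_insert _ h1, ?_⟩
  rw [Finset.card_insert_of_notMem (h3.fr S), h2]

theorem CtrOK.k1ext {K : SComplex} {u v w : ℕ} (S : CtrOK K u v w) {L : SComplex}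
    (hL : IsK1 K u v w L) : ∀ s ∈ L.faces, ∃ F ∈ L.faces, s ⊆ F ∧ F.card = 4 := by
  intro s hs
  rcases hL.cases hs with ⟨hf, h1, h2, h3⟩ | ⟨τ, hf, rfl, h⟩
  · obtain ⟨F, hF, hsF, hF4⟩ := S.hK.ext s h1
    by_cases h4 : u ∉ F ∧ v ∉ F
    · exact ⟨F, (hL.free F (S.wK F hF)).2 ⟨hF, h4⟩, hsF, hF4⟩
    · have hP : PW K u v s := by
        refine ⟨h2, h3, ?_⟩
        by_cases hu : u ∈ F
        · exact Or.inl (mem_sub hF (by grind) (by simp))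
        · exact Or.inr (mem_sub hF (by grind) (by simp))
      obtain ⟨G, hG, hG1, hG2⟩ := S.extB hL hP
      exact ⟨G, hG, (Finset.subset_insert _ _).trans hG1, hG2⟩
  · exact S.extB hL h

theorem CtrOK.k1card {K : SComplex} {u v w : ℕ} (S : CtrOK K u v w) {L : SComplex}
    (hL : IsK1 K u v w L) : ∀ s ∈ L.faces, s.card ≤ 4 := by
  intro s hs
  rcases hL.cases hs with ⟨hf, h1, h2, h3⟩ | ⟨τ, hf, rfl, h⟩
  · exact S.hK.card_le s h1
  · rw [Finset.card_insert_of_notMem hf]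
    rcases h.2.2 with h' | h'
    · have := S.hK.card_le _ h'
      rwa [Finset.card_insert_of_notMem h.1] at this
    · have := S.hK.card_le _ h'
      rwa [Finset.card_insert_of_notMem h.2.1] at this

theorem CtrOK.no5 {K : SComplex} {u v w : ℕ} (S : CtrOK K u v w) {r : Finset ℕ} (hr : r.card = 3)
    (hu : u ∉ r) (hv : v ∉ r) (h1 : insert u r ∈ K.faces) (h2 : insert v r ∈ K.faces) : False := by
  have h := S.hK.card_le _ (S.hl r hu hv h1 h2)
  have hne := S.ne
  rw [Finset.card_insert_of_notMem (by grind), Finset.card_insert_of_notMem hv, hr] at h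
  omega

theorem CtrOK.k1two_one {K : SComplex} {u v w : ℕ} (S : CtrOK K u v w) {L : SComplex}
    (hL : IsK1 K u v w L) {e : Finset ℕ} (he : e.card = 2) (hP : PW K u v e)
    (hu : insert u e ∈ K.faces) (hv : insert v e ∉ K.faces) :
    ∃ x y, x ≠ y ∧ ∀ z, (z ∉ insert w e ∧ insert z (insert w e) ∈ L.faces) ↔
      (z = x ∨ z = y) := by
  obtain ⟨x, y, hxy, hz⟩ := S.hK.two _ hu (by rw [Finset.card_insert_of_notMem hP.1, he])
  refine ⟨x, y, hxy, fun z => ?_⟩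
  rw [← hz]
  have hne := S.ne
  have hwe := hP.fr S
  constructor
  · rintro ⟨h1, h2⟩
    rw [Finset.insert_comm, hL.ins _ (by grind)] at h2
    have hvz : insert v (insert z e) ∉ K.faces := fun h => hv (mem_sub h (by grind) (by simp))
    have := h2.2.2.resolve_right hvz
    have := h2.1
    exact ⟨by grind, mem_eq (h2.2.2.resolve_right hvz) (by grind)⟩
  · rintro ⟨h1, h2⟩
    have hzw := S.wK _ h2
    have hzv : z ≠ v := by
      rintro rfl
      exact hv (mem_sub h2 (by grind) (by simp))
    have := hP.1
    have := hP.2.1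
    refine ⟨by grind, ?_⟩
    rw [Finset.insert_comm, hL.ins _ (by grind)]
    exact ⟨by grind, by grind, Or.inl (mem_eq h2 (by grind))⟩

theorem CtrOK.k1two {K : SComplex} {u v w : ℕ} (S : CtrOK K u v w) {L : SComplex}
    (hL : IsK1 K u v w L) :
    ∀ r ∈ L.faces, r.card = 3 → ∃ x y, x ≠ y ∧ ∀ z, (z ∉ r ∧ insert z r ∈ L.faces) ↔
      (z = x ∨ z = y) := by
  intro r hr hr3
  have hne := S.ne
  have hwu : w ≠ u := by
    have := S.wK _ S.huv
    grind
  have hwv : w ≠ v := by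
    have := S.wK _ S.huv
    grind
  rcases hL.cases hr with ⟨hf, h1, h2, h3⟩ | ⟨e, hf, rfl, h⟩
  · obtain ⟨x, y, hxy, hz⟩ := S.hK.two r h1 hr3
    have hx := (hz x).2 (Or.inl rfl)
    have hy := (hz y).2 (Or.inr rfl)
    have hxw : x ≠ w := fun h => S.wK _ hx.2 (by simp [h])
    have hyw : y ≠ w := fun h => S.wK _ hy.2 (by simp [h])
    have hn : ¬ ((x = u ∨ x = v) ∧ (y = u ∨ y = v)) := by
      rintro ⟨h4 | h4, h5 | h5⟩
      · exact hxy (h4.trans h5.symm)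
      · exact S.no5 hr3 h2 h3 (h4 ▸ hx.2) (h5 ▸ hy.2)
      · exact S.no5 hr3 h2 h3 (h5 ▸ hy.2) (h4 ▸ hx.2)
      · exact hxy (h4.trans h5.symm)
    refine ⟨if x = u ∨ x = v then w else x, if y = u ∨ y = v then w else y, ?_, ?_⟩
    · clear * - hxy hxw hyw hn
      grind
    · intro z
      by_cases hzw : z = w
      · subst hzw
        rw [hL.ins r hf, PW]
        have eu := hz u
        have ev := hz v
        clear * - eu ev h2 h3 hf hxw hyw
        grind
      · rw [hL.free _ (by grind)]
        have ez := hz z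
        clear * - ez h2 h3 hf hxw hyw hzw
        grind
  · rw [Finset.card_insert_of_notMem hf] at hr3
    have he : e.card = 2 := by omega
    by_cases hu : insert u e ∈ K.faces
    · by_cases hv : insert v e ∈ K.faces
      · have huve := S.hl e h.1 h.2.1 hu hv
        have h1 := h.1
        have h2 := h.2.1
        obtain ⟨x, hx, hzx⟩ := S.hK.other (r := insert u e) (a := v)
          (by rw [Finset.card_insert_of_notMem h.1, he]) (by grind) (mem_eq huve (by grind))
        obtain ⟨y, hy, hzy⟩ := S.hK.other (r := insert v e) (a := u)
          (by rw [Finset.card_insert_of_notMem h.2.1, he]) (by grind) huve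
        have hx' := (hzx x).2 (Or.inr rfl)
        have hy' := (hzy y).2 (Or.inr rfl)
        have hxw : x ≠ w := fun h => S.wK _ hx'.2 (by simp [h])
        have hyw : y ≠ w := fun h => S.wK _ hy'.2 (by simp [h])
        refine ⟨x, y, ?_, fun z => ?_⟩
        · rintro rfl
          refine S.no5 (r := insert x e) ?_ ?_ ?_ (mem_eq hx'.2 (by grind)) (mem_eq hy'.2 (by grind))
          · rw [Finset.card_insert_of_notMem (by grind), he]
          · grind
          · grind
        · constructor
          · rintro ⟨h3, h4⟩
            rw [Finset.insert_comm, hL.ins _ (by grind)] at h4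
            have h5 := h4.1
            have h6 := h4.2.1
            rcases h4.2.2 with h7 | h7
            · have := (hzx z).1 ⟨by grind, mem_eq h7 (by grind)⟩
              grind
            · have := (hzy z).1 ⟨by grind, mem_eq h7 (by grind)⟩
              grind
          · rintro (rfl | rfl)
            · refine ⟨by grind, ?_⟩
              rw [Finset.insert_comm, hL.ins _ (by grind)]
              exact ⟨by grind, by grind, Or.inl (mem_eq hx'.2 (by grind))⟩
            · refine ⟨by grind, ?_⟩
              rw [Finset.insert_comm, hL.ins _ (by grind)]
              exact ⟨by grind, by grind, Or.inr (mem_eq hy'.2 (by grind))⟩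
      · exact S.k1two_one hL he h hu hv
    · have hv := h.2.2.resolve_left hu
      exact S.symm.k1two_one hL.symm he ⟨h.2.1, h.1, h.2.2.symm⟩ hv hu

/-- In a finite 2-regular graph, removing a vertex leaves its two neighbours connected. -/
theorem cycle_remove (R : ℕ → ℕ → Prop) (V : Finset ℕ) (hV : ∀ a b, R a b → a ∈ V)
    (hs : ∀ a b, R a b → R b a) (hi : ∀ a, ¬ R a a)
    (h2 : ∀ a, (∃ b, R a b) → ∃ x y, x ≠ y ∧ ∀ z, R a z ↔ (z = x ∨ z = y))
    {v p q : ℕ} (hp : R v p) (hpq : p ≠ q) (hv : ∀ z, R v z → z = p ∨ z = q) :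
    Relation.ReflTransGen (fun a b => R a b ∧ a ≠ v ∧ b ≠ v) p q := by
  classical
  by_contra hcon
  let R' : ℕ → ℕ → Prop := fun a b => R a b ∧ a ≠ v ∧ b ≠ v
  let G : SimpleGraph V :=
    { Adj := fun a b => R' a b ∧ Relation.ReflTransGen R' p a
      symm := ⟨fun a b h => ⟨⟨hs _ _ h.1.1, h.1.2.2, h.1.2.1⟩, h.2.tail h.1⟩⟩
      loopless := ⟨fun a h => hi _ h.1.1⟩ }
  have hpv : p ≠ v := fun h => hi v (h ▸ hp)
  have hpV : p ∈ V := hV _ _ (hs _ _ hp)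
  obtain ⟨y, hy, hpy⟩ : ∃ y, y ≠ v ∧ ∀ z, R p z ↔ (z = v ∨ z = y) := by
    obtain ⟨x, y, hxy, hz⟩ := h2 p ⟨v, hs _ _ hp⟩
    rcases (hz v).1 (hs _ _ hp) with rfl | rfl
    · exact ⟨y, hxy.symm, hz⟩
    · exact ⟨x, hxy, fun z => by rw [hz, or_comm]⟩
  have hRpy : R p y := (hpy y).2 (Or.inr rfl)
  have d1 : G.degree ⟨p, hpV⟩ = 1 := by
    rw [← SimpleGraph.card_neighborFinset_eq_degree, Finset.card_eq_one]
    refine ⟨⟨y, hV _ _ (hs _ _ hRpy)⟩, ?_⟩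
    ext ⟨z, hz⟩
    simp only [SimpleGraph.mem_neighborFinset, Finset.mem_singleton, Subtype.mk.injEq]
    constructor
    · intro h
      exact ((hpy z).1 h.1.1).resolve_left h.1.2.2
    · rintro rfl
      exact ⟨⟨hRpy, hpv, hy⟩, .refl⟩
  obtain ⟨⟨c, hc⟩, hcp, hodd⟩ := G.exists_ne_odd_degree_of_exists_odd_degree ⟨p, hpV⟩
    (by rw [d1]; exact odd_one)
  have hpos : 0 < G.degree ⟨c, hc⟩ := hodd.pos
  rw [SimpleGraph.degree_pos_iff_exists_adj] at hpos
  obtain ⟨⟨e, he⟩, hce⟩ := hpos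
  have hcp' : c ≠ p := fun h => hcp (by simp [h])
  have hcv : c ≠ v := hce.1.2.1
  have hRc : Relation.ReflTransGen R' p c := hce.2
  have hnv : ¬ R c v := by
    intro h
    rcases hv c (hs _ _ h) with h | h
    · exact hcp' h
    · exact hcon (h ▸ hRc)
  obtain ⟨x, y, hxy, hz⟩ := h2 c ⟨e, hce.1.1⟩
  have hx := (hz x).2 (Or.inl rfl)
  have hy' := (hz y).2 (Or.inr rfl)
  have d2 : G.degree ⟨c, hc⟩ = 2 := by
    rw [← SimpleGraph.card_neighborFinset_eq_degree, Finset.card_eq_two]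
    refine ⟨⟨x, hV _ _ (hs _ _ hx)⟩, ⟨y, hV _ _ (hs _ _ hy')⟩, by simpa using hxy, ?_⟩
    ext ⟨z, hzV⟩
    simp only [SimpleGraph.mem_neighborFinset, Finset.mem_singleton, Finset.mem_insert,
      Subtype.mk.injEq]
    rw [← hz z]
    constructor
    · intro h
      exact h.1.1
    · intro h
      exact ⟨⟨h, hcv, fun h' => hnv (h' ▸ h)⟩, hRc⟩
  rw [d2] at hodd
  exact absurd hodd (by decide)

/-- Rerouting a path around a vertex. -/
theorem rtg_avoid {R R' : ℕ → ℕ → Prop} {v : ℕ} (hs : ∀ a b, R a b → R b a)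
    (hR : ∀ a b, R a b → a ≠ v → b ≠ v → R' a b)
    (hN : ∀ p q, R v p → R v q → p ≠ v → q ≠ v → Relation.ReflTransGen R' p q) {a b : ℕ}
    (h : Relation.ReflTransGen R a b) (ha : a ≠ v) (hb : b ≠ v) :
    Relation.ReflTransGen R' a b := by
  have key : (b ≠ v → Relation.ReflTransGen R' a b) ∧
      (b = v → ∃ p, R v p ∧ p ≠ v ∧ Relation.ReflTransGen R' a p) := by
    clear hb
    induction h with
    | refl => exact ⟨fun _ => .refl, fun h => absurd h ha⟩
    | @tail c d hac hcd ih =>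
      by_cases hc : c = v
      · obtain ⟨p, h1, h2, h3⟩ := ih.2 hc
        subst hc
        refine ⟨fun hd => h3.trans (hN p d h1 hcd h2 hd), fun hd => ⟨p, h1, h2, h3⟩⟩
      · have h3 := ih.1 hc
        refine ⟨fun hd => h3.tail (hR _ _ hcd hc hd), fun hd => ⟨c, ?_, hc, h3⟩⟩
        subst hd
        exact hs _ _ hcd
  exact key.1 hb

theorem CtrOK.gu {K : SComplex} {u v w : ℕ} (S : CtrOK K u v w) {L : SComplex}
    (hL : IsK1 K u v w L) {τ : Finset ℕ} (hτ : τ.card ≤ 1) (hu : u ∉ τ) (hv : v ∉ τ) {a b : ℕ}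
    (ha : a ∉ τ) (hau : a ≠ u) (hav : a ≠ v) (hb : b ∉ τ) (hbu : b ≠ u) (hbv : b ≠ v)
    (haK : insert u (insert a τ) ∈ K.faces) (hbK : insert u (insert b τ) ∈ K.faces) :
    Relation.ReflTransGen (L.LAdj (insert w τ)) a b := by
  have hlift : ∀ a b, K.LAdj (insert u τ) a b → a ≠ v → b ≠ v → L.LAdj (insert w τ) a b := by
    rintro a b ⟨h1, h2, h3⟩ hav hbv
    have hw := S.wK _ h3
    have h4 : insert w (insert a (insert b τ)) ∈ L.faces := by
      rw [hL.ins _ (by clear * - hw; grind)]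
      exact ⟨by clear * - h1 h2 hu; grind, by clear * - hav hbv hv; grind,
        Or.inl (mem_eq h3 (by clear * -; grind))⟩
    exact ⟨by clear * - h1 hw; grind, by clear * - h2 hw; grind,
      mem_eq h4 (by clear * -; grind)⟩
  have hpath := S.hK.conn (insert u τ) ((Finset.card_insert_le _ _).trans (by omega)) a b
    (by clear * - ha hau; grind) (by clear * - hb hbu; grind)
    (mem_eq haK (by clear * -; grind)) (mem_eq hbK (by clear * -; grind))
  refine rtg_avoid (fun _ _ h => h.symm) hlift ?_ hpath hav hbv
  intro p q hp hq hpv hqv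
  rcases Nat.lt_or_ge τ.card 1 with h0 | h0
  · obtain rfl : τ = ∅ := Finset.card_eq_zero.1 (by omega)
    have hpq := S.hK.conn {u, v} (Finset.card_le_two) p q
      (by have := hp.2.1; clear * - this hpv; grind) (by have := hq.2.1; clear * - this hqv; grind)
      (mem_eq hp.2.2 (by clear * -; grind)) (mem_eq hq.2.2 (by clear * -; grind))
    refine hpq.lift (fun x => x) ?_
    rintro x y ⟨h1, h2, h3⟩
    refine hlift x y ⟨by clear * - h1; grind, by clear * - h2; grind, ?_⟩ (by clear * - h1; grind)
      (by clear * - h2; grind)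
    exact mem_sub h3 (by clear * -; grind) (by simp)
  · obtain ⟨x, rfl⟩ := Finset.card_eq_one.1 (le_antisymm hτ h0)
    have hux : u ≠ x := by simpa using hu
    by_cases hpq : p = q
    · rw [hpq]
    let R : ℕ → ℕ → Prop := fun a b => K.LAdj {u, x} a b ∧ a ≠ b
    have h2 : ∀ a, (∃ b, R a b) → ∃ x y, x ≠ y ∧ ∀ z, R a z ↔ (z = x ∨ z = y) := by
      rintro a ⟨b, ⟨h1, h2, h3⟩, h4⟩
      obtain ⟨y, z, hyz, hz⟩ := S.hK.two {a, u, x} (mem_sub h3 (by clear * -; grind) (by simp))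
        (by
          have h1' : a ≠ u ∧ a ≠ x := by simpa using h1
          exact Finset.card_eq_three.2 ⟨a, u, x, h1'.1, h1'.2, hux, rfl⟩)
      refine ⟨y, z, hyz, fun t => ?_⟩
      rw [← hz t]
      constructor
      · rintro ⟨⟨h5, h6, h7⟩, h8⟩
        exact ⟨by clear * - h6 h8; grind, mem_eq h7 (by clear * -; grind)⟩
      · rintro ⟨h5, h6⟩
        exact ⟨⟨h1, by clear * - h5; grind, mem_eq h6 (by clear * -; grind)⟩,
          by clear * - h5; grind⟩
    have hRp : R v p := ⟨hp, hpv.symm⟩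
    have hRq : R v q := ⟨hq, hqv.symm⟩
    refine (cycle_remove R K.vertexSet ?_ ?_ ?_ h2 hRp hpq ?_).lift (fun x => x) ?_
    · rintro a b ⟨⟨h1, h2, h3⟩, h4⟩
      exact mem_vertexSet.2 ⟨_, h3, by simp⟩
    · rintro a b h
      exact ⟨h.1.symm, h.2.symm⟩
    · rintro a h
      exact h.2 rfl
    · obtain ⟨y, z, hyz, hz⟩ := h2 v ⟨p, hRp⟩
      intro t ht
      have e1 := (hz t).1 ht
      have e2 := (hz p).1 hRp
      have e3 := (hz q).1 hRq
      clear * - e1 e2 e3 hpq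
      grind
    · rintro a b ⟨⟨h1, h2⟩, h3, h4⟩
      exact hlift a b h1 h3 h4

theorem CtrOK.k1conn {K : SComplex} {u v w : ℕ} (S : CtrOK K u v w) {L : SComplex}
    (hL : IsK1 K u v w L) : ∀ σ : Finset ℕ, σ.card ≤ 2 → L.LConn σ := by
  intro σ hσ a b ha hb haL hbL
  by_cases hw : w ∈ σ
  · obtain ⟨τ, hτ, rfl⟩ : ∃ τ, w ∉ τ ∧ σ = insert w τ :=
      ⟨σ.erase w, by simp, (Finset.insert_erase hw).symm⟩
    rw [Finset.card_insert_of_notMem hτ] at hσ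
    have haw : a ≠ w ∧ a ∉ τ := by simpa using ha
    have hbw : b ≠ w ∧ b ∉ τ := by simpa using hb
    rw [Finset.insert_comm, hL.ins _ (by clear * - haw hτ; grind)] at haL
    rw [Finset.insert_comm, hL.ins _ (by clear * - hbw hτ; grind)] at hbL
    obtain ⟨au, av, haL⟩ := haL
    obtain ⟨bu, bv, hbL⟩ := hbL
    simp only [Finset.mem_insert, not_or] at au av bu bv
    have Gu : ∀ a b, a ∉ τ → a ≠ u → a ≠ v → b ∉ τ → b ≠ u → b ≠ v → _ → _ → _ :=
      fun a b h1 h2 h3 h4 h5 h6 h7 h8 => S.gu hL (τ := τ) (by omega) au.2 av.2 (a := a) (b := b)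
        h1 h2 h3 h4 h5 h6 h7 h8
    have Gv : ∀ a b, a ∉ τ → a ≠ u → a ≠ v → b ∉ τ → b ≠ u → b ≠ v → _ → _ → _ :=
      fun a b h1 h2 h3 h4 h5 h6 h7 h8 => S.symm.gu hL.symm (τ := τ) (by omega) av.2 au.2 (a := a)
        (b := b) h1 h3 h2 h4 h6 h5 h7 h8
    have mid : insert u τ ∈ K.faces → insert v τ ∈ K.faces → ∃ p, p ∉ τ ∧ p ≠ u ∧ p ≠ v ∧
        insert u (insert p τ) ∈ K.faces ∧ insert v (insert p τ) ∈ K.faces := by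
      intro h1 h2
      have h3 := S.hl τ au.2 av.2 h1 h2
      obtain ⟨p, hp, hpK⟩ := S.hK.exists_insert h3
        ((Finset.card_insert_le _ _).trans (by have := Finset.card_insert_le v τ; omega))
      refine ⟨p, by clear * - hp; grind, by clear * - hp; grind, by clear * - hp; grind,
        mem_sub hpK (by clear * -; grind) (by simp), mem_sub hpK (by clear * -; grind) (by simp)⟩
    have su : ∀ {x y : ℕ}, insert x (insert y τ) ∈ K.faces → insert x τ ∈ K.faces :=
      fun h => mem_sub h (by clear * -; grind) (by simp)
    rcases haL with h1 | h1 <;> rcases hbL with h2 | h2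
    · exact Gu a b haw.2 (Ne.symm au.1) (Ne.symm av.1) hbw.2 (Ne.symm bu.1) (Ne.symm bv.1) h1 h2
    · obtain ⟨p, p1, p2, p3, p4, p5⟩ := mid (su h1) (su h2)
      exact (Gu a p haw.2 (Ne.symm au.1) (Ne.symm av.1) p1 p2 p3 h1 p4).trans
        (Gv p b p1 p2 p3 hbw.2 (Ne.symm bu.1) (Ne.symm bv.1) p5 h2)
    · obtain ⟨p, p1, p2, p3, p4, p5⟩ := mid (su h2) (su h1)
      exact (Gv a p haw.2 (Ne.symm au.1) (Ne.symm av.1) p1 p2 p3 h1 p5).trans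
        (Gu p b p1 p2 p3 hbw.2 (Ne.symm bu.1) (Ne.symm bv.1) p4 h2)
    · exact Gv a b haw.2 (Ne.symm au.1) (Ne.symm av.1) hbw.2 (Ne.symm bu.1) (Ne.symm bv.1) h1 h2
  · let f : ℕ → ℕ := fun x => if x = u ∨ x = v then w else x
    have pre : ∀ a, a ∉ σ → insert a σ ∈ L.faces →
        u ∉ σ ∧ v ∉ σ ∧ ∃ a0, a0 ∉ σ ∧ insert a0 σ ∈ K.faces ∧ f a0 = a := by
      intro a ha haL
      by_cases haw : a = w
      · subst haw
        rw [hL.ins _ hw] at haL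
        refine ⟨haL.1, haL.2.1, ?_⟩
        rcases haL.2.2 with h | h
        · exact ⟨u, haL.1, h, by simp [f]⟩
        · exact ⟨v, haL.2.1, h, by simp [f]⟩
      · rw [hL.free _ (by clear * - haw hw; grind)] at haL
        obtain ⟨h1, h2, h3⟩ := haL
        simp only [Finset.mem_insert, not_or] at h2 h3
        refine ⟨h2.2, h3.2, a, ha, h1, ?_⟩
        simp [f, Ne.symm h2.1, Ne.symm h3.1]
    obtain ⟨hu, hv, a0, a1, a2, rfl⟩ := pre a ha haL
    obtain ⟨-, -, b0, b1, b2, rfl⟩ := pre b hb hbL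
    refine (S.hK.conn σ hσ a0 b0 a1 b1 a2 b2).lift f ?_
    rintro x y ⟨h1, h2, h3⟩
    have hw3 := S.wK _ h3
    have hf : ∀ x, x ∉ σ → f x ∉ σ := by
      intro x hx
      simp only [f]
      split_ifs
      · exact hw
      · exact hx
    refine ⟨hf x h1, hf y h2, ?_⟩
    by_cases hx : x = u ∨ x = v <;> by_cases hy : y = u ∨ y = v
    · simp only [f, hx, hy, if_true, Finset.insert_idem]
      rw [hL.ins _ hw]
      refine ⟨hu, hv, ?_⟩
      have : insert x σ ∈ K.faces := mem_sub h3 (by clear * -; grind) (by simp)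
      rcases hx with rfl | rfl
      · exact Or.inl this
      · exact Or.inr this
    · simp only [f, hx, hy, if_true, if_false]
      rw [hL.ins _ (by clear * - hw3; grind)]
      refine ⟨by clear * - hu hy; grind, by clear * - hv hy; grind, ?_⟩
      rcases hx with rfl | rfl
      · exact Or.inl h3
      · exact Or.inr h3
    · simp only [f, hx, hy, if_true, if_false]
      rw [Finset.insert_comm, hL.ins _ (by clear * - hw3; grind)]
      refine ⟨by clear * - hu hx; grind, by clear * - hv hx; grind, ?_⟩
      rw [Finset.insert_comm] at h3
      rcases hy with rfl | rfl
      · exact Or.inl h3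
      · exact Or.inr h3
    · simp only [f, hx, hy, if_false]
      rw [hL.free _ (by clear * - hw3; grind)]
      exact ⟨h3, by clear * - hu hx hy; grind, by clear * - hv hx hy; grind⟩
theorem CtrOK.k1npm {K : SComplex} {u v w : ℕ} (S : CtrOK K u v w) {L : SComplex}
    (hL : IsK1 K u v w L) : L.NPM := by
  refine ⟨⟨{w}, ?_⟩, S.k1ext hL, S.k1card hL, S.k1two hL, S.k1conn hL⟩
  refine (hL.ins ∅ (by simp)).2 ⟨by simp, by simp, Or.inl ?_⟩
  exact mem_sub S.huv (by simp) (by simp)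

theorem CtrOK.wL {K : SComplex} {u v w : ℕ} (S : CtrOK K u v w) {L : SComplex}
    (hL : IsK1 K u v w L) : {w} ∈ L.faces :=
  (hL.ins ∅ (by simp)).2 ⟨by simp, by simp, Or.inl (mem_sub S.huv (by simp) (by simp))⟩

theorem CtrOK.ctr {K : SComplex} {u v w : ℕ} (S : CtrOK K u v w) {L : SComplex}
    (hL : IsK1 K u v w L) : EdgeContraction K L := by
  refine ⟨u, v, S.huv, S.ne, ?_, w, ?_, ?_⟩
  · ext γ
    rcases γ.eq_empty_or_nonempty with rfl | hγ
    · simp [SComplex.not_empty_mem]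
    rw [Finset.mem_inter, lk_mem1 hγ, lk_mem1 hγ, lk_mem2 hγ]
    constructor
    · rintro ⟨⟨h1, h2⟩, h3, h4⟩
      exact ⟨h1, h3, S.hl γ h1 h3 h2 h4⟩
    · rintro ⟨h1, h2, h3⟩
      exact ⟨⟨h1, mem_sub h3 (by clear * -; grind) (by simp)⟩, h2,
        mem_sub h3 (by clear * -; grind) (by simp)⟩
  · intro h
    obtain ⟨s, hs, hw⟩ := mem_vertexSet.1 h
    exact S.wK s hs hw
  · refine cone_eq (S.k1npm hL) (S.wL hL) fun s => ?_
    rw [Finset.mem_filter]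
    constructor
    · rintro ⟨h1, h2⟩
      have := S.wK s h1
      exact ⟨(hL.free s this).2 ⟨h1, h2⟩, this⟩
    · rintro ⟨h1, h2⟩
      exact (hL.free s h2).1 h1

theorem CtrOK.g2lt {K : SComplex} {u v w : ℕ} (S : CtrOK K u v w) {L : SComplex}
    (hL : IsK1 K u v w L) {D : Finset ℕ} (hD : 4 ≤ D.card)
    (hD' : ∀ x ∈ D, x ≠ u ∧ x ≠ v ∧ {u, v, x} ∈ K.faces) : L.g2 < K.g2 := by
  classical
  have hne := S.ne
  have huv := S.huv
  let Nu : Finset ℕ := K.vertexSet.filter fun x => x ≠ u ∧ {u, x} ∈ K.faces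
  let Nv : Finset ℕ := K.vertexSet.filter fun x => x ≠ v ∧ u ∉ ({v, x} : Finset ℕ) ∧ {v, x} ∈ K.faces
  have hNu : ∀ x, x ∈ Nu ↔ x ≠ u ∧ {u, x} ∈ K.faces := by
    intro x
    simp only [Nu, Finset.mem_filter, and_iff_right_iff_imp]
    intro h
    exact sub_vertexSet h.2 (by simp)
  have hNv : ∀ x, x ∈ Nv ↔ x ≠ v ∧ u ∉ ({v, x} : Finset ℕ) ∧ {v, x} ∈ K.faces := by
    intro x
    simp only [Nv, Finset.mem_filter, and_iff_right_iff_imp]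
    intro h
    exact sub_vertexSet h.2.2 (by simp)
  have k1 := count_star K.faces u Nu hNu
  have k2 := count_star (K.faces.filter fun s => u ∉ s) v Nv (by
    intro x; rw [hNv, Finset.mem_filter]; tauto)
  have k3 := count_star L.faces w (Nu.erase v ∪ Nv) (by
    intro x
    rw [Finset.mem_union, Finset.mem_erase, hNu, hNv]
    by_cases hx : x = w
    · subst hx
      have a1 : ({u, x} : Finset ℕ) ∉ K.faces := fun h => S.wK _ h (by simp)
      have a2 : ({v, x} : Finset ℕ) ∉ K.faces := fun h => S.wK _ h (by simp)
      simp [a1, a2]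
    · rw [hL.ins {x} (by simpa using Ne.symm hx)]
      unfold PW
      simp only [Finset.mem_singleton, Finset.mem_insert]
      grind)
  have p1 := count_pt K.faces u (mem_sub huv (by simp) (by simp))
  have p2 := count_pt (K.faces.filter fun s => u ∉ s) v (by
    rw [Finset.mem_filter]
    exact ⟨mem_sub huv (by simp) (by simp), by simpa using hne⟩)
  have p3 := count_pt L.faces w (S.wL hL)
  have hfr : (L.faces.filter fun s => w ∉ s) = (K.faces.filter fun s => u ∉ s).filter fun s => v ∉ s := by
    ext s
    simp only [Finset.mem_filter]
    constructor
    · rintro ⟨h1, h2⟩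
      have := (hL.free s h2).1 h1
      tauto
    · rintro ⟨⟨h1, h2⟩, h3⟩
      exact ⟨(hL.free s (S.wK s h1)).2 ⟨h1, h2, h3⟩, S.wK s h1⟩
  have hcard := Finset.card_union_add_card_inter (Nu.erase v) Nv
  have hvN : v ∈ Nu := (hNu v).2 ⟨hne.symm, huv⟩
  have hce := Finset.card_erase_add_one hvN
  have hDs : D ⊆ Nu.erase v ∩ Nv := by
    intro x hx
    obtain ⟨h1, h2, h3⟩ := hD' x hx
    rw [Finset.mem_inter, Finset.mem_erase, hNu, hNv]
    exact ⟨⟨h2, h1, mem_sub h3 (by clear * -; grind) (by simp)⟩, h2, by simp [hne, h1.symm],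
      mem_sub h3 (by clear * -; grind) (by simp)⟩
  have hDc := Finset.card_le_card hDs
  rw [hfr] at k3 p3
  have e1 : K.fnum 1 = (K.faces.filter fun s => s.card = 2).card := rfl
  have e2 : K.fnum 0 = (K.faces.filter fun s => s.card = 1).card := rfl
  have e3 : L.fnum 1 = (L.faces.filter fun s => s.card = 2).card := rfl
  have e4 : L.fnum 0 = (L.faces.filter fun s => s.card = 1).card := rfl
  unfold g2
  omega

theorem no_contract {K : SComplex} (hR : InClassR K) {u v : ℕ} (ne : u ≠ v)
    (huv : ({u, v} : Finset ℕ) ∈ K.faces)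
    (hl : ∀ γ, u ∉ γ → v ∉ γ → insert u γ ∈ K.faces → insert v γ ∈ K.faces →
      insert u (insert v γ) ∈ K.faces) {D : Finset ℕ} (hD : 4 ≤ D.card)
    (hD' : ∀ x ∈ D, x ≠ u ∧ x ≠ v ∧ {u, v, x} ∈ K.faces) : False := by
  have hK := NPM.of_normal hR.1
  obtain ⟨n, hn⟩ := Finset.exists_nat_subset_range K.vertexSet
  have S : CtrOK K u v n := ⟨hK, ne, huv, hl, by
    intro s hs h
    have := hn (sub_vertexSet hs h)
    rw [Finset.mem_range] at this
    omega⟩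
  obtain ⟨L, hL⟩ := S.exists
  have h1 := hR.2.2.2.2 L (S.k1npm hL).normal (Or.inr (Or.inl (S.ctr hL)))
  have h2 := S.g2lt hL hD hD'
  omega
theorem fill {K : SComplex} (hR : InClassR K) {s : Finset ℕ} (hs : s.card = 4)
    (h : ∀ x ∈ s, s.erase x ∈ K.faces) : s ∈ K.faces := by
  refine hR.2.2.2.1 s hs fun t ht => ?_
  rw [properFaces, Finset.mem_filter, Finset.mem_powerset] at ht
  obtain ⟨h1, h2, h3⟩ := ht
  obtain ⟨x, hx, hxt⟩ := Finset.exists_of_ssubset (Finset.ssubset_iff_subset_ne.2 ⟨h1, h3⟩)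
  refine mem_sub (h x hx) ?_ (Finset.nonempty_iff_ne_empty.2 h2)
  clear * - h1 hxt
  grind

theorem fill4 {K : SComplex} (hR : InClassR K) {a b c d : ℕ} (hab : a ≠ b) (hac : a ≠ c)
    (had : a ≠ d) (hbc : b ≠ c) (hbd : b ≠ d) (hcd : c ≠ d)
    (h1 : ({a, b, c} : Finset ℕ) ∈ K.faces) (h2 : ({a, b, d} : Finset ℕ) ∈ K.faces)
    (h3 : ({a, c, d} : Finset ℕ) ∈ K.faces) (h4 : ({b, c, d} : Finset ℕ) ∈ K.faces) :
    ({a, b, c, d} : Finset ℕ) ∈ K.faces := by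
  refine fill hR (Finset.card_eq_of_equiv_fin ?_ |>.trans rfl) ?_
  · exact (Finset.equivFinOfCardEq (by
      rw [Finset.card_insert_of_notMem (by simp [*]), Finset.card_insert_of_notMem (by simp [*]),
        Finset.card_insert_of_notMem (by simp [*]), Finset.card_singleton]))
  · intro x hx
    simp only [Finset.mem_insert, Finset.mem_singleton] at hx
    rcases hx with rfl | rfl | rfl | rfl
    · exact mem_eq h4 (by clear * - hab hac had; grind)
    · exact mem_eq h3 (by clear * - hab hbc hbd; grind)
    · exact mem_eq h2 (by clear * - hac hbc hcd; grind)
    · exact mem_eq h1 (by clear * - had hbd hcd; grind)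

/-- A vertex permutation mapping `A` to `B` induces a homeomorphism. -/
theorem real_homeo {A B : SComplex} (σ : Equiv.Perm ℕ) (hσ : ∀ x, σ (σ x) = x)
    (h1 : ∀ s ∈ A.faces, s.image σ ∈ B.faces) (h2 : ∀ s ∈ B.faces, s.image σ ∈ A.faces) :
    Nonempty (↥A.realSpace ≃ₜ ↥B.realSpace) := by
  have key : ∀ {A B : SComplex}, (∀ s ∈ A.faces, s.image σ ∈ B.faces) →
      ∀ x ∈ A.realSpace, (fun i => x (σ i)) ∈ B.realSpace := by
    rintro A B h x ⟨hx, s, hs, hsup, hsum⟩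
    refine ⟨fun i => hx _, s.image σ, h s hs, fun i hi => ?_, ?_⟩
    · exact Finset.mem_image.2 ⟨σ i, hsup _ hi, hσ i⟩
    · rw [Finset.sum_image (fun a _ b _ hab => σ.injective hab)]
      simpa [hσ] using hsum
  let e : (ℕ → ℝ) ≃ₜ (ℕ → ℝ) :=
    { toFun := fun x i => x (σ i)
      invFun := fun x i => x (σ i)
      left_inv := fun x => by funext i; simp [hσ]
      right_inv := fun x => by funext i; simp [hσ]
      continuous_toFun := by fun_prop
      continuous_invFun := by fun_prop }
  refine ⟨e.subtype fun x => ⟨key h1 x, fun h => ?_⟩⟩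
  have := key h2 _ h
  simpa [e, hσ] using this

/-- A normal 3-pseudomanifold containing the boundary of a 4-simplex has no vertex outside,
and all of its vertex links are homeomorphic. -/
theorem simplex_links {K : SComplex} (hN : K.IsNormalPseudomanifold 3) {V : Finset ℕ}
    (hV : V.card = 5) (h : ∀ x ∈ V, V.erase x ∈ K.faces) {t w : ℕ} (ht : {t} ∈ K.faces)
    (hw : w ∈ V) (hsph : K.HasSphereLink 3 w) : K.HasSphereLink 3 t := by
  classical
  have hK := NPM.of_normal hN
  have hsub : ∀ s : Finset ℕ, s ⊆ V → s.card ≤ 4 → s.Nonempty → s ∈ K.faces := by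
    intro s hs hc hne
    obtain ⟨x, hx, hxs⟩ := Finset.exists_mem_notMem_of_card_lt_card (s := s) (t := V) (by omega)
    refine mem_sub (h x hx) ?_ hne
    clear * - hs hxs
    grind
  have hstep : ∀ s s', K.FacetAdj s s' → s ⊆ V → s' ⊆ V := by
    rintro s s' ⟨f1, f2, f3⟩ hs
    have c1 := hK.facet_iff.1 f1
    have c2 := hK.facet_iff.1 f2
    set r := s ∩ s' with hr
    have hr3 : r.card = 3 := by omega
    have hrs : r ⊆ s := Finset.inter_subset_left
    have hrs' : r ⊆ s' := Finset.inter_subset_right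
    have hrK : r ∈ K.faces := mem_sub c1.1 hrs (by rw [← Finset.card_pos]; omega)
    obtain ⟨x, y, hxy, hz⟩ := hK.two r hrK hr3
    have hVr : (V \ r).card = 2 := by
      rw [Finset.card_sdiff_of_subset (hrs.trans hs)]; omega
    obtain ⟨p, q, hpq, hVr⟩ := Finset.card_eq_two.1 hVr
    have hin : ∀ p ∈ V \ r, p ∉ r ∧ insert p r ∈ K.faces := by
      intro p hp
      rw [Finset.mem_sdiff] at hp
      refine ⟨hp.2, hsub _ (Finset.insert_subset hp.1 (hrs.trans hs)) ?_ (by simp)⟩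
      rw [Finset.card_insert_of_notMem hp.2]; omega
    have e1 := (hz p).1 (hin p (by simp [hVr]))
    have e2 := (hz q).1 (hin q (by simp [hVr]))
    have hp : p ∈ V := (Finset.mem_sdiff.1 (by rw [hVr]; simp : p ∈ V \ r)).1
    have hq : q ∈ V := (Finset.mem_sdiff.1 (by rw [hVr]; simp : q ∈ V \ r)).1
    intro m hm
    by_cases hmr : m ∈ r
    · exact hs (hrs hmr)
    · have e3 := (hz m).1 ⟨hmr, mem_sub c2.1 (Finset.insert_subset hm hrs') (by simp)⟩
      have : m = p ∨ m = q := by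
        clear * - e1 e2 e3 hpq
        grind
      rcases this with rfl | rfl <;> assumption
  have hall : ∀ F, K.IsFacet F → F ⊆ V := by
    intro F hF
    have h0 : K.IsFacet (V.erase w) :=
      hK.facet_iff.2 ⟨h w hw, by rw [Finset.card_erase_of_mem hw, hV]⟩
    have hp := hN.2.1 _ _ h0 hF
    clear hF
    induction hp with
    | refl => exact Finset.erase_subset _ _
    | tail _ h1 ih => exact hstep _ _ h1 ih
  have hfaces : ∀ s ∈ K.faces, s ⊆ V := by
    intro s hs
    obtain ⟨F, hF, hsF, hF4⟩ := hK.ext s hs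
    exact hsF.trans (hall F (hK.facet_iff.2 ⟨hF, hF4⟩))
  have htV : t ∈ V := hfaces _ ht (by simp)
  let σ : Equiv.Perm ℕ := Equiv.swap t w
  have hσ : ∀ x, σ (σ x) = x := fun x => Equiv.swap_apply_self t w x
  have himg : ∀ s ∈ K.faces, s.image σ ∈ K.faces := by
    intro s hs
    refine hsub _ ?_ (Finset.card_image_le.trans (hK.card_le s hs)) ((face_ne hs).image _)
    intro y hy
    obtain ⟨x, hx, rfl⟩ := Finset.mem_image.1 hy
    have hxV := hfaces s hs hx
    simp only [σ, Equiv.swap_apply_def]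
    split_ifs <;> assumption
  have hlk : ∀ a b, σ a = b → ∀ s ∈ (K.lk {a}).faces, s.image σ ∈ (K.lk {b}).faces := by
    rintro a b rfl s hs
    have hne := face_ne hs
    rw [lk_mem1 hne] at hs
    rw [lk_mem1 (hne.image _)]
    refine ⟨?_, ?_⟩
    · intro hm
      obtain ⟨x, hx, hxa⟩ := Finset.mem_image.1 hm
      exact hs.1 (σ.injective hxa ▸ hx)
    · rw [← Finset.image_insert]
      exact himg _ hs.2
  obtain ⟨e⟩ := real_homeo (A := K.lk {t}) (B := K.lk {w}) σ hσ
    (hlk t w (Equiv.swap_apply_left t w)) (hlk w t (Equiv.swap_apply_right t w))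
  obtain ⟨homeo⟩ := hsph
  exact ⟨e.trans homeo⟩

/-- Main closedness lemma. -/
theorem in_link {K : SComplex} {t u v : ℕ} (hR : InClassR K)
    (ht : K.IsSingular t) (hsph : ∀ x, {x} ∈ K.faces → x ≠ t → K.HasSphereLink 3 x)
    (hne : u ≠ v) (hnot : ({u, v} : Finset ℕ) ∉ (K.lk {t}).faces)
    {γ : Finset ℕ} (hu : u ∉ γ) (hv : v ∉ γ) (huK : insert u γ ∈ K.faces)
    (hvK : insert v γ ∈ K.faces) {w : ℕ} (hw : w ∈ γ) (hwK : ({u, v, w} : Finset ℕ) ∈ K.faces) :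
    insert u (insert v γ) ∈ K.faces := by
  have hK := NPM.of_normal hR.1
  have hwu : w ≠ u := fun h => hu (h ▸ hw)
  have hwv : w ≠ v := fun h => hv (h ▸ hw)
  have hwt : w ≠ t := by
    rintro rfl
    apply hnot
    rw [lk_mem1 (by simp)]
    exact ⟨by simp [hwu, hwv], mem_eq hwK (by clear * -; grind)⟩
  have hws : K.HasSphereLink 3 w := hsph w (mem_sub hwK (by simp) (by simp)) hwt
  have E : ∀ z ∈ γ, z ≠ w → ({u, v, w, z} : Finset ℕ) ∈ K.faces := by
    intro z hz hzw
    have hzu : z ≠ u := fun h => hu (h ▸ hz)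
    have hzv : z ≠ v := fun h => hv (h ▸ hz)
    have a1 : ({u, w, z} : Finset ℕ) ∈ K.faces :=
      mem_sub huK (by clear * - hw hz; grind) (by simp)
    have a2 : ({v, w, z} : Finset ℕ) ∈ K.faces :=
      mem_sub hvK (by clear * - hw hz; grind) (by simp)
    by_contra hcon
    have a3 : ({u, v, z} : Finset ℕ) ∉ K.faces := fun h =>
      hcon (fill4 hR hne hwu.symm hzu.symm hwv.symm hzv.symm hzw.symm hwK h a1 a2)
    refine no_missing hR hws (C := {u, v, z})
      (Finset.card_eq_three.2 ⟨u, v, z, hne, hzu.symm, hzv.symm, rfl⟩)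
      (by simp [hwu, hwv, hzw.symm]) ?_ a3
    intro x hx y hy
    simp only [Finset.mem_insert, Finset.mem_singleton] at hx hy
    rcases hx with rfl | rfl | rfl <;> rcases hy with rfl | rfl | rfl <;>
    first
    | exact mem_sub hwK (by clear * -; grind) (by simp)
    | exact mem_sub a1 (by clear * -; grind) (by simp)
    | exact mem_sub a2 (by clear * -; grind) (by simp)
  have hc := hK.card_le _ huK
  rw [Finset.card_insert_of_notMem hu] at hc
  have hce := Finset.card_erase_add_one hw
  obtain ⟨δ, hδ⟩ : ∃ δ, δ = γ.erase w := ⟨_, rfl⟩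
  have hγ : γ = insert w δ := by rw [hδ, Finset.insert_erase hw]
  have hwδ : w ∉ δ := by simp [hδ]
  rw [← hδ] at hce
  have h012 : δ.card = 0 ∨ δ.card = 1 ∨ δ.card = 2 := by omega
  rcases h012 with h | h | h
  · rw [Finset.card_eq_zero] at h
    subst h
    rw [hγ]
    exact hwK
  · obtain ⟨z, rfl⟩ := Finset.card_eq_one.1 h
    rw [hγ]
    exact E z (by simp [hγ]) (fun h => hwδ (by simp [h]))
  · obtain ⟨z, y, hzy, rfl⟩ := Finset.card_eq_two.1 h
    have hwz : w ≠ z ∧ w ≠ y := by simpa using hwδ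
    have b1 := E z (by simp [hγ]) hwz.1.symm
    have b2 := E y (by simp [hγ]) hwz.2.symm
    subst hγ
    have hu' : u ≠ w ∧ u ≠ z ∧ u ≠ y := by simpa using hu
    have hv' : v ≠ w ∧ v ≠ z ∧ v ≠ y := by simpa using hv
    have b3 : ({u, v, z, y} : Finset ℕ) ∈ K.faces :=
      fill4 hR hne hu'.2.1 hu'.2.2 hv'.2.1 hv'.2.2 hzy
        (mem_sub b1 (by clear * -; grind) (by simp)) (mem_sub b2 (by clear * -; grind) (by simp))
        (mem_sub huK (by clear * -; grind) (by simp)) (mem_sub hvK (by clear * -; grind) (by simp))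
    refine absurd (simplex_links hR.1 (V := {u, v, w, z, y}) ?_ ?_ ht.1 (by simp) hws) ht.2
    · have hn : u ∉ ({v, w, z, y} : Finset ℕ) := by simp [hne, hu']
      rw [Finset.card_insert_of_notMem hn, Finset.card_insert_of_notMem hv,
        Finset.card_insert_of_notMem hwδ, h]
    · intro x hx
      simp only [Finset.mem_insert, Finset.mem_singleton] at hx
      rcases hx with rfl | rfl | rfl | rfl | rfl
      · exact mem_eq hvK (by clear * - hu' hne; grind)
      · exact mem_eq huK (by clear * - hv' hne; grind)
      · exact mem_eq b3 (by clear * - hu' hv' hwz; grind)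
      · exact mem_eq b2 (by clear * - hu' hv' hwz hzy; grind)
      · exact mem_eq b1 (by clear * - hu' hv' hwz hzy; grind)

theorem not_all_link {K : SComplex} {t u v : ℕ} (hR : InClassR K)
    (hsph : ∀ x, {x} ∈ K.faces → x ≠ t → K.HasSphereLink 3 x)
    (hne : u ≠ v) (huv : ({u, v} : Finset ℕ) ∈ K.faces)
    (hl : ∀ γ, u ∉ γ → v ∉ γ → insert u γ ∈ K.faces → insert v γ ∈ K.faces →
      insert u (insert v γ) ∈ K.faces) : False := by
  have hK := NPM.of_normal hR.1
  obtain ⟨a, ha, haK⟩ := hK.exists_insert huv (Finset.card_le_two.trans (by omega))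
  have ha' : a ≠ u ∧ a ≠ v := by simpa using ha
  obtain ⟨b, c, hbc, hz⟩ := hK.two {a, u, v} haK
    (Finset.card_eq_three.2 ⟨a, u, v, ha'.1, ha'.2, hne, rfl⟩)
  obtain ⟨hb, hbK⟩ := (hz b).2 (Or.inl rfl)
  obtain ⟨hc, hcK⟩ := (hz c).2 (Or.inr rfl)
  have hb' : b ≠ a ∧ b ≠ u ∧ b ≠ v := by simpa using hb
  have hc' : c ≠ a ∧ c ≠ u ∧ c ≠ v := by simpa using hc
  obtain ⟨d, hda, hz'⟩ := hK.other (r := {b, u, v}) (a := a)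
    (Finset.card_eq_three.2 ⟨b, u, v, hb'.2.1, hb'.2.2, hne, rfl⟩)
    (by simp [hb'.1.symm, ha']) (mem_eq hbK (by clear * -; grind))
  obtain ⟨hd, hdK⟩ := (hz' d).2 (Or.inr rfl)
  have hd' : d ≠ b ∧ d ≠ u ∧ d ≠ v := by simpa using hd
  by_cases hdc : d = c
  · subst hdc
    have sub : ∀ p q : ℕ, (p = u ∨ p = v) → ∀ x ∈ ({a, b, d} : Finset ℕ), ∀ y ∈ ({a, b, d} : Finset ℕ),
        ({p, x, y} : Finset ℕ) ∈ K.faces := by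
      intro p _ hp x hx y hy
      simp only [Finset.mem_insert, Finset.mem_singleton] at hx hy
      rcases hp with rfl | rfl <;> rcases hx with rfl | rfl | rfl <;>
        rcases hy with rfl | rfl | rfl <;>
      first
      | exact mem_sub hbK (by clear * -; grind) (by simp)
      | exact mem_sub hcK (by clear * -; grind) (by simp)
      | exact mem_sub hdK (by clear * -; grind) (by simp)
    have sub := fun p => sub p 0
    have hC3 : ({a, b, d} : Finset ℕ).card = 3 :=
      Finset.card_eq_three.2 ⟨a, b, d, hb'.1.symm, hda.symm, hbc, rfl⟩
    have hCu : u ∉ ({a, b, d} : Finset ℕ) := by simp [ha'.1.symm, hb'.2.1.symm, hd'.2.1.symm]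
    have hCv : v ∉ ({a, b, d} : Finset ℕ) := by simp [ha'.2.symm, hb'.2.2.symm, hd'.2.2.symm]
    have hCK : ({a, b, d} : Finset ℕ) ∉ K.faces := by
      intro h
      have f : ∀ p, (p = u ∨ p = v) → p ∉ ({a, b, d} : Finset ℕ) →
          insert p ({a, b, d} : Finset ℕ) ∈ K.faces := by
        intro p hp hpn
        have hpn' : p ≠ a ∧ p ≠ b ∧ p ≠ d := by simpa using hpn
        exact fill4 hR hpn'.1 hpn'.2.1 hpn'.2.2 hb'.1.symm hda.symm hbc
          (sub p hp a (by simp) b (by simp)) (sub p hp a (by simp) d (by simp))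
          (sub p hp b (by simp) d (by simp)) h
      have h5 := hK.card_le _ (hl _ hCu hCv (f u (Or.inl rfl) hCu) (f v (Or.inr rfl) hCv))
      rw [Finset.card_insert_of_notMem (by
        rw [Finset.mem_insert, not_or]; exact ⟨hne, hCu⟩),
        Finset.card_insert_of_notMem hCv, hC3] at h5
      omega
    by_cases hut : u = t
    · exact no_missing hR (hsph v (mem_sub huv (by simp) (by simp)) (by rw [← hut]; exact hne.symm))
        hC3 hCv (sub v (Or.inr rfl)) hCK
    · exact no_missing hR (hsph u (mem_sub huv (by simp) (by simp)) hut)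
        hC3 hCu (sub u (Or.inl rfl)) hCK
  · refine no_contract hR hne huv hl (D := {a, b, c, d}) ?_ ?_
    · rw [Finset.card_insert_of_notMem (by simp [hb'.1.symm, hc'.1.symm, hda.symm]),
        Finset.card_insert_of_notMem (by simp [hbc, hd'.1.symm]),
        Finset.card_insert_of_notMem (by simpa using Ne.symm hdc), Finset.card_singleton]
    · intro x hx
      simp only [Finset.mem_insert, Finset.mem_singleton] at hx
      rcases hx with rfl | rfl | rfl | rfl
      · exact ⟨ha'.1, ha'.2, mem_eq haK (by clear * -; grind)⟩
      · exact ⟨hb'.2.1, hb'.2.2, mem_sub hbK (by clear * -; grind) (by simp)⟩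
      · exact ⟨hc'.2.1, hc'.2.2, mem_sub hcK (by clear * -; grind) (by simp)⟩
      · exact ⟨hd'.2.1, hd'.2.2, mem_sub hdK (by clear * -; grind) (by simp)⟩

end split

/-- Lemma 3.4: in the class `R` with a unique singular vertex `t`, for any edge `uv`
not in `lk(t)`, the set `lk(u) ∩ lk(v) − lk(uv)` is a nonempty closed subcomplex
contained in the interiors of the discs `lk(u) − st(v, lk(u))` and
`lk(v) − st(u, lk(v))`; in particular, there is no vertex `z` of it and vertex
`w ∈ lk(uv)` with the edge `zw` in `lk(u) ∩ lk(v) − lk(uv)`. -/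
theorem statement5 (K : SComplex) (t u v : ℕ) (hK : InClassR K)
    (hsing : {w | K.IsSingular w} = {t})
    (huv : ({u, v} : Finset ℕ) ∈ K.faces) (hne : u ≠ v)
    (hnotlk : ({u, v} : Finset ℕ) ∉ (K.lk {t}).faces) :
    let S : Finset (Finset ℕ) :=
      ((K.lk {u}).faces ∩ (K.lk {v}).faces) \ (K.lk {u, v}).faces
    S.Nonempty ∧
    (∀ γ ∈ S, ∀ τ ⊆ γ, τ ≠ ∅ → τ ∈ S) ∧
    (∀ γ ∈ S, ∀ w ∈ γ, ({w} : Finset ℕ) ∉ (K.lk {u, v}).faces) ∧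
    ¬ ∃ z w : ℕ, ({z} : Finset ℕ) ∈ S ∧ ({w} : Finset ℕ) ∈ (K.lk {u, v}).faces ∧
      ({z, w} : Finset ℕ) ∈ S := by
  intro S
  have ht : K.IsSingular t := by
    have : t ∈ {w | K.IsSingular w} := by rw [hsing]; rfl
    exact this
  have hsph : ∀ x, {x} ∈ K.faces → x ≠ t → K.HasSphereLink 3 x := by
    intro x hx hxt
    by_contra h
    have : x ∈ {w | K.IsSingular w} := ⟨hx, h⟩
    rw [hsing] at this
    exact hxt this
  have hS : ∀ γ, γ ∈ S ↔ γ.Nonempty ∧ u ∉ γ ∧ v ∉ γ ∧ insert u γ ∈ K.faces ∧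
      insert v γ ∈ K.faces ∧ insert u (insert v γ) ∉ K.faces := by
    intro γ
    rcases γ.eq_empty_or_nonempty with rfl | hγ
    · simp [S, SComplex.not_empty_mem]
    · simp only [S, Finset.mem_sdiff, Finset.mem_inter, lk_mem1 hγ, lk_mem2 hγ, hγ, true_and]
      tauto
  have c3 : ∀ γ ∈ S, ∀ w ∈ γ, ({w} : Finset ℕ) ∉ (K.lk {u, v}).faces := by
    intro γ hγ w hw hwl
    obtain ⟨-, h1, h2, h3, h4, h5⟩ := (hS γ).1 hγ
    rw [lk_mem2 (by simp)] at hwl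
    exact h5 (in_link hK ht hsph hne hnotlk h1 h2 h3 h4 hw hwl.2.2)
  refine ⟨?_, ?_, c3, ?_⟩
  · by_contra hem
    rw [Finset.not_nonempty_iff_eq_empty] at hem
    refine not_all_link hK hsph hne huv fun γ h1 h2 h3 h4 => ?_
    rcases γ.eq_empty_or_nonempty with rfl | hγ
    · exact huv
    · by_contra h5
      have : γ ∈ S := (hS γ).2 ⟨hγ, h1, h2, h3, h4, h5⟩
      rw [hem] at this
      simp at this
  · intro γ hγ τ hτ hτe
    have hτn := Finset.nonempty_iff_ne_empty.2 hτe
    obtain ⟨-, h1, h2, h3, h4, h5⟩ := (hS γ).1 hγ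
    refine (hS τ).2 ⟨hτn, fun h => h1 (hτ h), fun h => h2 (hτ h),
      mem_sub h3 (Finset.insert_subset_insert _ hτ) (by simp),
      mem_sub h4 (Finset.insert_subset_insert _ hτ) (by simp), fun h6 => ?_⟩
    obtain ⟨w, hw⟩ := hτn
    refine c3 γ hγ w (hτ hw) ?_
    rw [lk_mem2 (by simp)]
    refine ⟨fun h => h1 (hτ ?_), fun h => h2 (hτ ?_), mem_sub h6 ?_ (by simp)⟩
    · rw [Finset.mem_singleton.1 h]; exact hw
    · rw [Finset.mem_singleton.1 h]; exact hw
    · exact Finset.insert_subset_insert _ (Finset.insert_subset_insert _ (by simpa using hw))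
  · rintro ⟨z, w, -, h2, h3⟩
    exact c3 _ h3 w (by simp) h2

end SComplex
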